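/- Let f be an integer-valued multiplicative function with f(p) = F(p) for all primes p, where F(T) ∈ ℤ[T] is a nonconstant polynomial without multiple roots. There is a constant C = C(F) such that: for every positive integer q all of whose prime factors exceed C, the set {n : gcd(f(n), q) = 1} is infinite, and for every integer a with gcd(a, q) = 1, #{n ≤ x : f(n) ≡ a (mod q)} / #{n ≤ x : gcd(f(n), q) = 1} → 1/φ(q) as x → ∞. -/

import Mathlib

/-- The number of positive integers `n ≤ x` satisfying the predicate `P`. -/
noncomputable def cnt (x : ℝ) (P : ℕ → Prop) : ℕ :=
  Set.ncard {n : ℕ | 0 < n ∧ (n : ℝ) ≤ x ∧ P n}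


section
open Filter Topology MeasureTheory Set

noncomputable def fej (v : ℝ) : ℝ := ∫ t in (-1:ℝ)..1, (1 - |t|) * Real.cos (t * v)

lemma fej_eq {v : ℝ} (hv : v ≠ 0) : fej v = 2 * (1 - Real.cos v) / v ^ 2 := by
  have h1 : ∫ t in (0:ℝ)..1, (1 - |t|) * Real.cos (t * v) = (1 - Real.cos v) / v ^ 2 := by
    have e : ∫ t in (0:ℝ)..1, (1 - |t|) * Real.cos (t * v)
        = ∫ t in (0:ℝ)..1, (1 - t) * Real.cos (t * v) := by
      apply intervalIntegral.integral_congr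
      intro t ht
      rw [uIcc_of_le zero_le_one] at ht
      simp only [abs_of_nonneg ht.1]
    rw [e, intervalIntegral.integral_eq_sub_of_hasDerivAt
      (f := fun t => (1 - t) * (Real.sin (t * v) / v) - Real.cos (t * v) / v ^ 2)]
    · simp; field_simp; ring
    · intro t _
      have a1 : HasDerivAt (fun t : ℝ => t * v) v t := by simpa using (hasDerivAt_id t).mul_const v
      have a2 := a1.sin
      have a3 := a1.cos
      have a4 : HasDerivAt (fun t : ℝ => 1 - t) (-1) t := by
        simpa using (hasDerivAt_id t).const_sub 1
      refine ((a4.mul (a2.div_const v)).sub (a3.div_const (v^2))).congr_deriv ?_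
      field_simp; ring
    · apply Continuous.intervalIntegrable; fun_prop
  have h2 : ∫ t in (-1:ℝ)..0, (1 - |t|) * Real.cos (t * v) = (1 - Real.cos v) / v ^ 2 := by
    rw [← h1]
    have := intervalIntegral.integral_comp_neg (a := 0) (b := 1)
      (fun t : ℝ => (1 - |t|) * Real.cos (t * v))
    simp at this
    rw [← this]
  unfold fej
  rw [← intervalIntegral.integral_add_adjacent_intervals (b := 0), h1, h2]
  · ring
  all_goals (apply Continuous.intervalIntegrable; fun_prop)

lemma fej_nonneg (v : ℝ) : 0 ≤ fej v := by
  by_cases hv : v = 0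
  · subst hv
    unfold fej
    apply intervalIntegral.integral_nonneg (by norm_num)
    intro t ht
    have := abs_le.mpr ht
    simp; linarith
  · rw [fej_eq hv]
    have := Real.cos_le_one v
    positivity [sub_nonneg.mpr this]

lemma fej_cont : Continuous fej := by
  unfold fej
  apply intervalIntegral.continuous_parametric_intervalIntegral_of_continuous'
  fun_prop

lemma fej_le (v : ℝ) : fej v ≤ 8 / (1 + v ^ 2) := by
  have h1 : fej v ≤ 2 := by
    unfold fej
    calc _ ≤ ∫ t in (-1:ℝ)..1, (1:ℝ) := by
          apply intervalIntegral.integral_mono_on (by norm_num)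
          · apply Continuous.intervalIntegrable; fun_prop
          · simp
          · intro t ht
            have := abs_le.mpr ht
            have h3 := Real.cos_le_one (t*v)
            have h4 := abs_nonneg t
            nlinarith
      _ = 2 := by norm_num
  rw [le_div_iff₀ (by positivity)]
  by_cases hv : v = 0
  · subst hv; simp; linarith
  · have : fej v * v ^2 ≤ 4 := by
      rw [fej_eq hv]
      have := Real.neg_one_le_cos v
      field_simp; linarith
    linarith

lemma fej_integrable : Integrable fej := by
  refine ((integrable_inv_one_add_sq.const_mul 8)).mono' fej_cont.aestronglyMeasurable ?_
  filter_upwards with v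
  rw [Real.norm_of_nonneg (fej_nonneg v)]
  exact fej_le v

lemma fej_pos : 0 < ∫ v, fej v := by
  rw [integral_pos_iff_support_of_nonneg fej_nonneg fej_integrable]
  apply IsOpen.measure_pos
  · exact isOpen_compl_singleton.preimage fej_cont
  · refine ⟨Real.pi, ?_⟩
    rw [Function.mem_support, fej_eq Real.pi_ne_zero, Real.cos_pi]
    have := Real.pi_pos
    positivity

lemma fej_complex (v : ℝ) :
    ∫ t in Ioc (-1:ℝ) 1, ((1 - |t| : ℝ) : ℂ) * Complex.exp (Complex.I * t * v) = (fej v : ℂ) := by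
  rw [← intervalIntegral.integral_of_le (by norm_num)]
  have h1 : ∀ t : ℝ, ((1 - |t| : ℝ) : ℂ) * Complex.exp (Complex.I * t * v)
      = (((1 - |t|) * Real.cos (t * v) : ℝ) : ℂ)
        + (((1 - |t|) * Real.sin (t * v) : ℝ) : ℂ) * Complex.I := by
    intro t
    rw [show Complex.I * t * v = ((t * v : ℝ) : ℂ) * Complex.I by push_cast; ring,
      Complex.exp_mul_I]
    push_cast; ring
  simp_rw [h1]
  rw [intervalIntegral.integral_add, intervalIntegral.integral_mul_const,
    intervalIntegral.integral_ofReal, intervalIntegral.integral_ofReal]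
  · have : ∫ t in (-1:ℝ)..1, (1 - |t|) * Real.sin (t * v) = 0 := by
      have := intervalIntegral.integral_comp_neg (a := -1) (b := 1)
        (fun t : ℝ => (1 - |t|) * Real.sin (t * v))
      simp at this
      linarith
    rw [this]; simp [fej]
  all_goals (apply Continuous.intervalIntegrable; fun_prop)

end

section
open Filter Topology MeasureTheory Set

lemma wi_fubini (B : ℝ → ℝ) (hB : Measurable B) (C : ℝ) (hC : ∀ u, |B u| ≤ C)
    (δ : ℝ) (hδ : 0 < δ) (l y : ℝ) :
    ∫ t in Ioc (-1:ℝ) 1, (((1 - |t| : ℝ) : ℂ) * Complex.exp (Complex.I * t * (l * y : ℝ))) *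
      (∫ u in Ioi (0:ℝ), (B u : ℂ) * Complex.exp (-((δ : ℂ) + Complex.I * (l * t : ℝ)) * u))
    = ((∫ u in Ioi (0:ℝ), B u * Real.exp (-δ * u) * fej (l * (y - u)) : ℝ) : ℂ) := by
  simp_rw [← integral_const_mul]
  rw [integral_integral_swap]
  · rw [← integral_complex_ofReal]
    congr 1
    ext u
    push_cast
    rw [← fej_complex, ← integral_const_mul]
    congr 1
    ext t
    rw [mul_mul_mul_comm, mul_comm (B u : ℂ), mul_comm _ (B u : ℂ)]
    have : Complex.exp (Complex.I * t * (l * y : ℝ)) *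
        Complex.exp (-((δ : ℂ) + Complex.I * (l * t : ℝ)) * u)
        = Complex.exp (-δ * u) * Complex.exp (Complex.I * t * (l * (y - u) : ℝ)) := by
      rw [← Complex.exp_add, ← Complex.exp_add]
      congr 1
      push_cast; ring
    push_cast at this ⊢
    rw [mul_assoc, this]
    ring
  · have hintg : Integrable (fun p : ℝ × ℝ => (1:ℝ) * (C * Real.exp (-δ * p.2)))
        ((volume.restrict (Ioc (-1:ℝ) 1)).prod (volume.restrict (Ioi (0:ℝ)))) := by
      apply Integrable.mul_prod (f := fun _ => (1:ℝ)) (g := fun u => C * Real.exp (-δ * u))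
      · exact integrable_const _
      · exact (integrableOn_exp_mul_Ioi (by linarith) 0).const_mul C
    refine hintg.mono' ?_ ?_
    · apply Measurable.aestronglyMeasurable
      unfold Function.uncurry
      fun_prop
    · rw [Measure.prod_restrict]
      filter_upwards [ae_restrict_mem (measurableSet_Ioc.prod measurableSet_Ioi)] with p hp
      obtain ⟨h1, h2⟩ := hp
      simp only [Function.uncurry, norm_mul, Complex.norm_exp, Complex.norm_real]
      have e1 : (Complex.I * (p.1:ℂ) * (l * y : ℝ)).re = 0 := by simp
      have e2 : (-((δ : ℂ) + Complex.I * (l * p.1 : ℝ)) * (p.2:ℂ)).re = -δ * p.2 := by simp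
      rw [e1, e2, Real.exp_zero, mul_one]
      have : |p.1| ≤ 1 := abs_le.mpr ⟨h1.1.le, h1.2⟩
      have h0 := abs_nonneg p.1
      have h3 : ‖1 - |p.1|‖ ≤ 1 := by rw [Real.norm_eq_abs, abs_le]; constructor <;> linarith
      gcongr
      exact hC _

/-- convolution limit -/
lemma wi_conv (B : ℝ → ℝ) (hB : Measurable B) (C : ℝ) (hC : ∀ u, |B u| ≤ C)
    (K : ℂ → ℂ) (hK : ContinuousOn K {z | 0 ≤ z.re})
    (hBK : ∀ z : ℂ, 0 < z.re → ∫ u in Ioi (0:ℝ), (B u : ℂ) * Complex.exp (-z * u) = K z)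
    (l : ℝ) (hl : 0 < l) (y : ℝ) :
    ((∫ u in Ioi (0:ℝ), B u * fej (l * (y - u)) : ℝ) : ℂ) =
    ∫ t in Ioc (-1:ℝ) 1, (((1 - |t| : ℝ) : ℂ) * Complex.exp (Complex.I * t * (l * y : ℝ))) *
      K (Complex.I * (l * t : ℝ)) := by
  have hfi : Integrable (fun u => fej (l * (y - u))) := by
    have h1 := (fej_integrable.comp_mul_left' hl.ne')
    exact h1.comp_sub_left y
  have T1 : Tendsto (fun δ : ℝ => ((∫ u in Ioi (0:ℝ), B u * Real.exp (-δ * u) * fej (l * (y - u)) : ℝ) : ℂ))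
      (𝓝[>] 0) (𝓝 ((∫ u in Ioi (0:ℝ), B u * fej (l * (y - u)) : ℝ) : ℂ)) := by
    apply (Complex.continuous_ofReal.tendsto _).comp
    apply tendsto_integral_filter_of_dominated_convergence (fun u => C * fej (l * (y - u)))
    · filter_upwards with δ
      have := fej_cont.measurable
      apply Measurable.aestronglyMeasurable
      fun_prop
    · filter_upwards [self_mem_nhdsWithin] with δ hδ
      filter_upwards [ae_restrict_mem measurableSet_Ioi] with u hu
      have hu' : (0:ℝ) < u := hu
      have hδ' : (0:ℝ) < δ := hδ
      rw [norm_mul, norm_mul, Real.norm_of_nonneg (fej_nonneg _), Real.norm_of_nonneg (Real.exp_pos _).le]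
      have h1 : Real.exp (-δ * u) ≤ 1 := Real.exp_le_one_iff.mpr (by nlinarith)
      have h2 := hC u
      have h3 := fej_nonneg (l * (y - u))
      have h4 : ‖B u‖ * Real.exp (-δ * u) ≤ C * 1 := by
        gcongr
        · exact (abs_nonneg _).trans h2
        · exact h2
      rw [mul_one] at h4
      gcongr
    · exact (hfi.const_mul C).restrict
    · filter_upwards with u
      have : Continuous (fun δ : ℝ => B u * Real.exp (-δ * u) * fej (l * (y - u))) := by fun_prop
      have := this.tendsto 0
      simp only [neg_zero, zero_mul, Real.exp_zero, mul_one] at this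
      exact this.mono_left nhdsWithin_le_nhds
  have T2 : Tendsto (fun δ : ℝ => ∫ t in Ioc (-1:ℝ) 1, (((1 - |t| : ℝ) : ℂ) *
      Complex.exp (Complex.I * t * (l * y : ℝ))) * K ((δ:ℂ) + Complex.I * (l * t : ℝ)))
      (𝓝[>] 0) (𝓝 (∫ t in Ioc (-1:ℝ) 1, (((1 - |t| : ℝ) : ℂ) *
      Complex.exp (Complex.I * t * (l * y : ℝ))) * K (Complex.I * (l * t : ℝ)))) := by
    have hcomp : IsCompact ((Icc (0:ℝ) 1) ×ˢ (Icc (-1:ℝ) 1)) := isCompact_Icc.prod isCompact_Icc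
    have hKc : ContinuousOn (fun p : ℝ × ℝ => K ((p.1:ℂ) + Complex.I * (l * p.2 : ℝ)))
        ((Icc (0:ℝ) 1) ×ˢ (Icc (-1:ℝ) 1)) := by
      apply hK.comp
      · fun_prop
      · intro p hp
        simp only [mem_ofPred_eq]
        simpa using hp.1.1
    obtain ⟨D, hD⟩ := hcomp.exists_bound_of_continuousOn hKc
    have hev : ∀ᶠ δ : ℝ in 𝓝[>] 0, δ ∈ Ioc (0:ℝ) 1 := Ioc_mem_nhdsGT one_pos
    apply tendsto_integral_filter_of_dominated_convergence (fun u => D)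
    · filter_upwards [hev] with δ hδ
      apply ContinuousOn.aestronglyMeasurable _ measurableSet_Ioc
      apply ContinuousOn.mul
      · fun_prop
      · apply hK.comp
        · fun_prop
        · intro p hp
          simp only [mem_ofPred_eq]
          simpa using hδ.1.le
    · filter_upwards [hev] with δ hδ
      filter_upwards [ae_restrict_mem measurableSet_Ioc] with t ht
      have h5 := hD (δ, t) ⟨⟨hδ.1.le, hδ.2⟩, ⟨ht.1.le, ht.2⟩⟩
      simp only [norm_mul, Complex.norm_exp, Complex.norm_real]
      have e1 : (Complex.I * (t:ℂ) * (l * y : ℝ)).re = 0 := by simp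
      rw [e1, Real.exp_zero, mul_one]
      have : |t| ≤ 1 := abs_le.mpr ⟨ht.1.le, ht.2⟩
      have h0 := abs_nonneg t
      have h3 : ‖1 - |t|‖ ≤ 1 := by rw [Real.norm_eq_abs, abs_le]; constructor <;> linarith
      calc _ ≤ 1 * D := by gcongr
        _ = D := one_mul D
    · exact integrable_const _
    · filter_upwards [ae_restrict_mem measurableSet_Ioc] with t ht
      apply Tendsto.const_mul
      have hw : ContinuousWithinAt K {z | 0 ≤ z.re} (Complex.I * (l * t : ℝ)) :=
        hK _ (by simp)
      apply hw.tendsto.comp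
      rw [tendsto_nhdsWithin_iff]
      constructor
      · have : Continuous (fun δ : ℝ => (δ:ℂ) + Complex.I * (l * t : ℝ)) := by fun_prop
        have := this.tendsto 0
        simp only [Complex.ofReal_zero, zero_add] at this
        exact this.mono_left nhdsWithin_le_nhds
      · filter_upwards [hev] with δ hδ
        show 0 ≤ ((δ:ℂ) + Complex.I * (l * t : ℝ)).re
        simpa using hδ.1.le
  refine tendsto_nhds_unique T1 (T2.congr' ?_)
  filter_upwards [self_mem_nhdsWithin] with δ hδ
  rw [← wi_fubini B hB C hC δ hδ l y]
  congr 1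
  ext t
  rw [hBK]
  simpa using hδ

lemma wi_conv_tendsto (B : ℝ → ℝ) (hB : Measurable B) (C : ℝ) (hC : ∀ u, |B u| ≤ C)
    (K : ℂ → ℂ) (hK : ContinuousOn K {z | 0 ≤ z.re})
    (hBK : ∀ z : ℂ, 0 < z.re → ∫ u in Ioi (0:ℝ), (B u : ℂ) * Complex.exp (-z * u) = K z)
    (l : ℝ) (hl : 0 < l) :
    Tendsto (fun y => ∫ u in Ioi (0:ℝ), B u * fej (l * (y - u))) atTop (𝓝 0) := by
  have key := fun y => wi_conv B hB C hC K hK hBK l hl y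
  have RL := Real.tendsto_integral_exp_smul_cocompact
    ((Ioc (-1:ℝ) 1).indicator (fun t => ((1 - |t| : ℝ) : ℂ) * K (Complex.I * (l * t : ℝ))))
  have h1 : Tendsto (fun y : ℝ => (-(l / (2 * Real.pi))) * y) atTop (cocompact ℝ) := by
    have : Tendsto (fun y : ℝ => (-(l / (2 * Real.pi))) * y) atTop atBot := by
      apply Tendsto.const_mul_atTop_of_neg _ tendsto_id
      have := Real.pi_pos
      have : 0 < l / (2 * Real.pi) := by positivity
      linarith
    exact this.mono_right atBot_le_cocompact
  have h2 := RL.comp h1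
  have h3 : Tendsto (fun y => ((∫ u in Ioi (0:ℝ), B u * fej (l * (y - u)) : ℝ) : ℂ)) atTop (𝓝 0) := by
    refine h2.congr fun y => ?_
    rw [key, ← integral_indicator measurableSet_Ioc]
    simp only [Function.comp]
    congr 1
    ext t
    by_cases ht : t ∈ Ioc (-1:ℝ) 1
    · simp only [indicator_of_mem ht]
      rw [Circle.smul_def, Real.fourierChar_apply, smul_eq_mul]
      have : Complex.exp (↑(2 * Real.pi * -(t * (-(l / (2 * Real.pi)) * y))) * Complex.I)
        = Complex.exp (Complex.I * t * (l * y : ℝ)) := by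
        congr 1
        have : (Real.pi : ℂ) ≠ 0 := by exact_mod_cast Real.pi_ne_zero
        push_cast
        field_simp
      rw [this]; ring
    · simp only [indicator_of_notMem ht, smul_zero]
  have h4 := (Complex.continuous_re.tendsto _).comp h3
  simpa [Function.comp_def] using h4

end

section
open Filter Topology MeasureTheory Set

lemma fej_scaled_integrable (l : ℝ) (hl : 0 < l) (y : ℝ) :
    Integrable (fun u => fej (l * (y - u))) := by
  have h1 := (fej_integrable.comp_mul_left' hl.ne')
  exact h1.comp_sub_left y

lemma fej_scaled_integral (l : ℝ) (hl : 0 < l) (y : ℝ) :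
    ∫ u, fej (l * (y - u)) = (∫ v, fej v) / l := by
  have h1 := integral_sub_left_eq_self (fun u => fej (l * u)) volume y
  rw [h1, Measure.integral_comp_mul_left, abs_of_pos (by positivity), smul_eq_mul]
  field_simp

lemma fej_scaled_half (l : ℝ) (hl : 0 < l) :
    Tendsto (fun y => ∫ u in Ioi (0:ℝ), fej (l * (y - u))) atTop (𝓝 ((∫ v, fej v) / l)) := by
  have h0 : ∀ y, ∫ u in Ioi (0:ℝ), fej (l * (y - u)) = ∫ v in Iio y, fej (l * v) := by
    intro y
    rw [← integral_indicator measurableSet_Ioi, ← integral_indicator measurableSet_Iio,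
      ← integral_sub_left_eq_self _ volume y]
    congr 1
    ext u
    by_cases hu : u < y
    · rw [indicator_of_mem (by simpa using hu), indicator_of_mem (by simpa using hu)]
      congr 1; ring
    · rw [indicator_of_notMem (by simpa using hu), indicator_of_notMem (by simpa using hu)]
  simp_rw [h0]
  have h1 : Integrable (fun v => fej (l * v)) := fej_integrable.comp_mul_left' hl.ne'
  have h2 : ∫ v, fej (l * v) = (∫ v, fej v) / l := by
    rw [Measure.integral_comp_mul_left, abs_of_pos (by positivity), smul_eq_mul]
    field_simp
  rw [← h2]
  exact (aecover_Iio tendsto_id).integral_tendsto_of_countably_generated h1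

lemma fej_scaled_window (l : ℝ) (hl : 0 < l) (η y : ℝ) (hη : 0 < η) :
    ∫ u in Ioc (y - η) (y + η), fej (l * (y - u)) = (∫ v in (-(l*η))..(l*η), fej v) / l := by
  rw [← intervalIntegral.integral_of_le (by linarith)]
  have h1 : ∀ u, fej (l * (y - u)) = fej (l * y - l * u) := fun u => by rw [mul_sub]
  simp_rw [h1]
  rw [intervalIntegral.integral_comp_sub_mul _ hl.ne']
  rw [show l * y - l * (y + η) = -(l * η) by ring, show l * y - l * (y - η) = l * η by ring,
    smul_eq_mul]
  field_simp

theorem wi_tauber (A : ℝ → ℝ) (hA : Measurable A) (C c : ℝ) (h0 : ∀ u, 0 ≤ A u)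
    (hC : ∀ u, A u ≤ C) (hmono : ∀ u v, u ≤ v → A u * Real.exp (-(v - u)) ≤ A v)
    (K : ℂ → ℂ) (hK : ContinuousOn K {z | 0 ≤ z.re})
    (hBK : ∀ z : ℂ, 0 < z.re →
      ∫ u in Ioi (0:ℝ), ((A u - c : ℝ) : ℂ) * Complex.exp (-z * u) = K z) :
    Tendsto A atTop (𝓝 c) := by
  set κ := ∫ v, fej v with hκ
  have κpos : 0 < κ := fej_pos
  have hCnn : 0 ≤ C := (h0 0).trans (hC 0)
  have hAi : ∀ l : ℝ, 0 < l → ∀ y, Integrable (fun u => A u * fej (l * (y - u))) := by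
    intro l hl y
    refine ((fej_scaled_integrable l hl y).const_mul C).mono' ?_ ?_
    · have := fej_cont.measurable
      apply Measurable.aestronglyMeasurable
      fun_prop
    · filter_upwards with u
      rw [norm_mul, Real.norm_of_nonneg (fej_nonneg _), Real.norm_of_nonneg (h0 u)]
      gcongr
      · exact fej_nonneg _
      · exact hC u
  -- the convolution converges
  have hD : ∀ l : ℝ, 0 < l → Tendsto (fun y => l / κ * ∫ u in Ioi (0:ℝ), A u * fej (l * (y - u)))
      atTop (𝓝 c) := by
    intro l hl
    have h1 := wi_conv_tendsto (fun u => A u - c) (hA.sub_const c) (C + |c|) (fun u => by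
      calc |A u - c| ≤ |A u| + |c| := abs_sub _ _
        _ ≤ C + |c| := by rw [abs_of_nonneg (h0 u)]; linarith [hC u]) K hK hBK l hl
    have h2 := (fej_scaled_half l hl).const_mul c
    have h3 := (h1.add h2).const_mul (l / κ)
    have e : l / κ * (0 + c * ((∫ v, fej v) / l)) = c := by
      rw [← hκ]; field_simp; ring
    rw [e] at h3
    refine h3.congr fun y => ?_
    rw [← integral_const_mul, ← integral_add]
    · congr 2
      ext u
      ring
    · have : Integrable (fun u => A u * fej (l * (y - u)) - c * fej (l * (y - u))) :=
        (hAi l hl y).sub ((fej_scaled_integrable l hl y).const_mul c)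
      refine this.restrict.congr ?_
      filter_upwards with u
      ring
    · exact ((fej_scaled_integrable l hl y).const_mul c).restrict
  have key : ∀ ε : ℝ, 0 < ε → ε < 1 → ∀ᶠ y in atTop,
      A y ≤ (1 + ε) / (1 - ε) * (c + ε) ∧ (c - ε - C * ε) / (1 + ε) ≤ A y := by
    intro ε hε hε1
    set η := Real.log (1 + ε) / 2 with hη
    have hηpos : 0 < η := by have := Real.log_pos (show 1 < 1 + ε by linarith); positivity
    have hexp : Real.exp (2 * η) = 1 + ε := by
      rw [hη, mul_div_cancel₀ _ (by norm_num), Real.exp_log (by linarith)]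
    have hexp' : Real.exp (-(2 * η)) = (1 + ε)⁻¹ := by rw [Real.exp_neg, hexp]
    -- choose l
    have hlim : Tendsto (fun l : ℝ => ∫ v in (-(l*η))..(l*η), fej v) atTop (𝓝 κ) := by
      apply intervalIntegral_tendsto_integral fej_integrable
      · exact tendsto_neg_atTop_atBot.comp (tendsto_id.atTop_mul_const hηpos)
      · exact tendsto_id.atTop_mul_const hηpos
    obtain ⟨l, hl1, hl⟩ := ((hlim.eventually (eventually_gt_nhds
      (show (1 - ε) * κ < κ by nlinarith))).and (eventually_gt_atTop 0)).exists
    set I := ∫ v in (-(l*η))..(l*η), fej v with hI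
    have hIκ : I ≤ κ := by
      rw [hI, intervalIntegral.integral_of_le (by nlinarith)]
      exact setIntegral_le_integral fej_integrable (by filter_upwards with v using fej_nonneg v)
    have hIpos : 0 < I := by nlinarith
    have hDl := hD l hl
    have e1 := (hDl.comp (tendsto_atTop_add_const_right atTop η tendsto_id)).eventually
      (eventually_lt_nhds (show c < c + ε by linarith))
    have e2 := (hDl.comp (tendsto_atTop_add_const_right atTop (-η) tendsto_id)).eventually
      (eventually_gt_nhds (show c - ε < c by linarith))
    filter_upwards [e1, e2, eventually_gt_atTop (2 * η)] with y h1 h2 hy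
    simp only [Function.comp, id] at h1 h2
    have mono1 : ∀ z : ℝ, η < z → Ioc (z - η) (z + η) ⊆ Ioi (0:ℝ) := by
      intro z hz u hu
      have := hu.1
      simp only [mem_Ioi]; linarith
    constructor
    · -- upper
      have b1 : A y * Real.exp (-(2*η)) * (I / l) ≤ ∫ u in Ioi (0:ℝ), A u * fej (l * (y + η - u)) := by
        calc A y * Real.exp (-(2*η)) * (I / l)
            = ∫ u in Ioc (y + η - η) (y + η + η), A y * Real.exp (-(2*η)) * fej (l * (y + η - u)) := by
              rw [integral_const_mul, fej_scaled_window l hl η _ hηpos]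
          _ ≤ ∫ u in Ioc (y + η - η) (y + η + η), A u * fej (l * (y + η - u)) := by
              apply setIntegral_mono_on
              · exact ((fej_scaled_integrable l hl _).const_mul _).integrableOn
              · exact (hAi l hl _).integrableOn
              · exact measurableSet_Ioc
              · intro u hu
                have hu1 : y < u := by have := hu.1; linarith
                have hu2 : u ≤ y + 2 * η := by have := hu.2; linarith
                apply mul_le_mul_of_nonneg_right _ (fej_nonneg _)
                refine le_trans ?_ (hmono y u hu1.le)
                apply mul_le_mul_of_nonneg_left _ (h0 y)
                apply Real.exp_le_exp.mpr
                linarith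
          _ ≤ _ := by
              apply setIntegral_mono_set
              · exact (hAi l hl _).integrableOn
              · filter_upwards with u using mul_nonneg (h0 u) (fej_nonneg _)
              · exact (mono1 _ (by linarith)).eventuallyLE
      have b2 : A y * (1 + ε)⁻¹ * (I / κ) ≤ c + ε := by
        rw [hexp'] at b1
        have := mul_le_mul_of_nonneg_left b1 (show 0 ≤ l / κ by positivity)
        refine le_trans (le_of_eq ?_) (this.trans h1.le)
        field_simp
      have b3 : 1 - ε ≤ I / κ := by rw [le_div_iff₀ κpos]; exact hl1.le
      have b4 : A y * (1 + ε)⁻¹ * (1 - ε) ≤ c + ε := by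
        refine le_trans ?_ b2
        have := h0 y
        gcongr
      have : A y = (1 + ε) / (1 - ε) * (A y * (1 + ε)⁻¹ * (1 - ε)) := by
        have : 1 - ε ≠ 0 := by linarith
        field_simp
      rw [this]
      have : 0 < 1 - ε := by linarith
      gcongr
    · -- lower
      have b1 : ∫ u in Ioi (0:ℝ), A u * fej (l * (y + -η - u)) ≤
          A y * Real.exp (2*η) * (I / l) + C * (κ / l - I / l) := by
        calc ∫ u in Ioi (0:ℝ), A u * fej (l * (y + -η - u))
            ≤ ∫ u, A u * fej (l * (y + -η - u)) :=
              setIntegral_le_integral (hAi l hl _) (by filter_upwards with u using mul_nonneg (h0 u) (fej_nonneg _))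
          _ = (∫ u in Ioc (y + -η - η) (y + -η + η), A u * fej (l * (y + -η - u)))
              + ∫ u in (Ioc (y + -η - η) (y + -η + η))ᶜ, A u * fej (l * (y + -η - u)) :=
              (integral_add_compl measurableSet_Ioc (hAi l hl _)).symm
          _ ≤ (∫ u in Ioc (y + -η - η) (y + -η + η), A y * Real.exp (2*η) * fej (l * (y + -η - u)))
              + ∫ u in (Ioc (y + -η - η) (y + -η + η))ᶜ, C * fej (l * (y + -η - u)) := by
              apply add_le_add
              · apply setIntegral_mono_on
                · exact (hAi l hl _).integrableOn
                · exact ((fej_scaled_integrable l hl _).const_mul _).integrableOn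
                · exact measurableSet_Ioc
                · intro u hu
                  have hu1 : y - 2 * η < u := by have := hu.1; linarith
                  have hu2 : u ≤ y := by have := hu.2; linarith
                  apply mul_le_mul_of_nonneg_right _ (fej_nonneg _)
                  have h5 := hmono u y hu2
                  calc A u = A u * Real.exp (-(y - u)) * Real.exp (y - u) := by
                        rw [mul_assoc, ← Real.exp_add]; simp
                    _ ≤ A y * Real.exp (y - u) := by gcongr
                    _ ≤ A y * Real.exp (2 * η) := by
                        apply mul_le_mul_of_nonneg_left _ (h0 y)
                        apply Real.exp_le_exp.mpr
                        linarith
              · apply setIntegral_mono_on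
                · exact (hAi l hl _).integrableOn
                · exact ((fej_scaled_integrable l hl _).const_mul _).integrableOn
                · exact measurableSet_Ioc.compl
                · intro u hu
                  exact mul_le_mul_of_nonneg_right (hC u) (fej_nonneg _)
          _ = _ := by
              have h6 := integral_add_compl (s := Ioc (y + -η - η) (y + -η + η)) measurableSet_Ioc
                (fej_scaled_integrable l hl (y + -η))
              rw [fej_scaled_integral l hl, fej_scaled_window l hl η _ hηpos] at h6
              rw [integral_const_mul, integral_const_mul, fej_scaled_window l hl η _ hηpos]
              rw [← hI] at h6 ⊢
              rw [← hκ] at h6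
              rw [← h6]; ring
      have b2 : c - ε ≤ A y * (1 + ε) * (I / κ) + C * (1 - I / κ) := by
        rw [hexp] at b1
        have := mul_le_mul_of_nonneg_left b1 (show 0 ≤ l / κ by positivity)
        refine (h2.le.trans this).trans (le_of_eq ?_)
        field_simp
      have b3 : 1 - ε ≤ I / κ := by rw [le_div_iff₀ κpos]; exact hl1.le
      have b3' : I / κ ≤ 1 := by rw [div_le_iff₀ κpos]; linarith
      have b4 : A y * (1 + ε) * (I / κ) ≤ A y * (1 + ε) * 1 := by
        have := h0 y
        gcongr
      have b5 : C * (1 - I / κ) ≤ C * ε := by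
        gcongr; linarith
      rw [div_le_iff₀ (by linarith)]
      linarith
  rw [tendsto_order]
  have nb : 𝓝[>] (0:ℝ) ≤ 𝓝 0 := nhdsWithin_le_nhds
  have hsmall : ∀ᶠ ε : ℝ in 𝓝[>] 0, 0 < ε ∧ ε < 1 := by
    have := Ioo_mem_nhdsGT (show (0:ℝ) < 1 by norm_num)
    filter_upwards [this] with ε h using h
  constructor
  · intro a ha
    have : Tendsto (fun ε : ℝ => (c - ε - C * ε) / (1 + ε)) (𝓝 0) (𝓝 ((c - 0 - C * 0) / (1 + 0))) := by
      apply ContinuousAt.tendsto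
      apply ContinuousAt.div
      · fun_prop
      · fun_prop
      · norm_num
    simp only [mul_zero, sub_zero, add_zero, div_one] at this
    obtain ⟨ε, h1, h2⟩ := (((this.mono_left nb).eventually (eventually_gt_nhds ha)).and hsmall).exists
    filter_upwards [key ε h2.1 h2.2] with y hy
    linarith [hy.2]
  · intro a ha
    have : Tendsto (fun ε : ℝ => (1 + ε) / (1 - ε) * (c + ε)) (𝓝 0) (𝓝 ((1 + 0) / (1 - 0) * (c + 0))) := by
      apply ContinuousAt.tendsto
      apply ContinuousAt.mul
      · apply ContinuousAt.div
        · fun_prop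
        · fun_prop
        · norm_num
      · fun_prop
    simp only [sub_zero, add_zero, div_one, one_mul] at this
    obtain ⟨ε, h1, h2⟩ := (((this.mono_left nb).eventually (eventually_lt_nhds ha)).and hsmall).exists
    filter_upwards [key ε h2.1 h2.2] with y hy
    linarith [hy.1]

end

section
open Filter Topology MeasureTheory Set
open ArithmeticFunction (vonMangoldt)
open ArithmeticFunction.vonMangoldt

/-- Chebyshev function in a residue class -/
noncomputable def psiA {q : ℕ} (a : ZMod q) (t : ℝ) : ℝ :=
  ∑ k ∈ Finset.Icc 1 ⌊t⌋₊, residueClass a k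

lemma psiA_mono {q : ℕ} (a : ZMod q) : Monotone (psiA a) := by
  intro s t h
  unfold psiA
  apply Finset.sum_le_sum_of_subset_of_nonneg
  · exact Finset.Icc_subset_Icc_right (Nat.floor_mono h)
  · intro k _ _
    exact residueClass_nonneg a k

lemma psiA_nonneg {q : ℕ} (a : ZMod q) (t : ℝ) : 0 ≤ psiA a t :=
  Finset.sum_nonneg fun k _ => residueClass_nonneg a k

lemma psiA_le {q : ℕ} (a : ZMod q) (t : ℝ) (ht : 0 ≤ t) : psiA a t ≤ (Real.log 4 + 4) * t := by
  refine le_trans ?_ (Chebyshev.psi_le_const_mul_self ht)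
  unfold psiA Chebyshev.psi
  exact Finset.sum_le_sum fun k _ => residueClass_le a k

theorem pnt_ap {q : ℕ} [NeZero q] (a : ZMod q) (ha : IsUnit a) :
    Tendsto (fun u : ℝ => psiA a (Real.exp u) * Real.exp (-u)) atTop (𝓝 ((q.totient : ℝ)⁻¹)) := by
  have hA : Measurable (fun u : ℝ => psiA a (Real.exp u) * Real.exp (-u)) := by
    have := (psiA_mono a).measurable
    fun_prop
  have hC : ∀ u, psiA a (Real.exp u) * Real.exp (-u) ≤ Real.log 4 + 4 := by
    intro u
    rw [Real.exp_neg, ← div_eq_mul_inv, div_le_iff₀ (Real.exp_pos _)]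
    exact psiA_le a _ (Real.exp_pos _).le
  have h0 : ∀ u, 0 ≤ psiA a (Real.exp u) * Real.exp (-u) :=
    fun u => mul_nonneg (psiA_nonneg _ _) (Real.exp_pos _).le
  apply wi_tauber _ hA (Real.log 4 + 4) _ h0 hC ?_
    (fun z => (LFunctionResidueClassAux a (1 + z) - (q.totient : ℂ)⁻¹) / (1 + z))
  · apply ContinuousOn.div
    · apply ContinuousOn.sub _ continuousOn_const
      apply (continuousOn_LFunctionResidueClassAux a).comp
      · fun_prop
      · intro z hz
        have : 0 ≤ z.re := hz
        show 1 ≤ (1 + z).re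
        simpa using this
    · fun_prop
    · intro z hz h
      have : 0 ≤ z.re := hz
      have h2 := congrArg Complex.re h
      simp at h2
      linarith
  · intro z hz
    have hs : 1 < (1 + z).re := by simpa using hz
    have hz0 : z ≠ 0 := by rintro rfl; simp at hz
    have hz1 : 1 + z ≠ 0 := by
      intro h; have := congrArg Complex.re h; simp at this; linarith
    have hEq := eqOn_LFunctionResidueClassAux ha (show (1 + z) ∈ {s : ℂ | 1 < s.re} from hs)
    simp only at hEq
    have hL := LSeries_eq_mul_integral_of_nonneg (residueClass a) (r := 1) (by norm_num) (s := 1 + z) hs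
      (by
        apply Asymptotics.IsBigO.of_bound (Real.log 4 + 4)
        filter_upwards with n
        have h1 := psiA_le a n (by positivity)
        have h2 := psiA_nonneg a n
        simp only [psiA, Nat.floor_natCast] at h1 h2
        rw [Real.norm_of_nonneg h2]
        simpa using h1) (residueClass_nonneg a)
    have hcv : ∫ t in Ioi (1:ℝ), (∑ k ∈ Finset.Icc 1 ⌊t⌋₊, (residueClass a k : ℂ)) * t ^ (-((1 + z) + 1))
        = ∫ u in Ioi (0:ℝ), ((psiA a (Real.exp u) * Real.exp (-u) : ℝ) : ℂ) * Complex.exp (-z * u) := by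
      have him : Real.exp '' (Ioi (0:ℝ)) = Ioi 1 := by
        ext t
        constructor
        · rintro ⟨u, hu, rfl⟩
          exact Real.one_lt_exp_iff.mpr hu
        · intro ht
          have ht' : (1:ℝ) < t := ht
          exact ⟨Real.log t, Real.log_pos ht', Real.exp_log (by linarith)⟩
      rw [← him, integral_image_eq_integral_abs_deriv_smul (f' := Real.exp) measurableSet_Ioi
        (fun x _ => (Real.hasDerivAt_exp x).hasDerivWithinAt) Real.exp_injective.injOn]
      congr 1
      ext u
      rw [abs_of_pos (Real.exp_pos u), Complex.real_smul]
      have e1 : ((Real.exp u : ℝ) : ℂ) ^ (-((1 + z) + 1)) = Complex.exp (-(2 + z) * u) := by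
        rw [Complex.cpow_def_of_ne_zero (by simp), ← Complex.ofReal_log (Real.exp_pos u).le,
          Real.log_exp]
        congr 1; ring
      rw [e1]
      unfold psiA
      push_cast
      have e2 : Complex.exp u * Complex.exp (-(2 + z) * u) = Complex.exp (-u) * Complex.exp (-z * u) := by
        rw [← Complex.exp_add, ← Complex.exp_add]; congr 1; ring
      rw [mul_left_comm, e2]; ring
    have hi1 : IntegrableOn (fun u : ℝ => Complex.exp (-z * u)) (Ioi 0) :=
      integrableOn_exp_mul_complex_Ioi (by simpa using hz) 0
    have hi2 : IntegrableOn (fun u : ℝ => ((psiA a (Real.exp u) * Real.exp (-u) : ℝ) : ℂ) * Complex.exp (-z * u)) (Ioi 0) := by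
      apply Integrable.bdd_mul (c := Real.log 4 + 4) hi1
      · exact (Complex.measurable_ofReal.comp hA).aestronglyMeasurable
      · filter_upwards with u
        rw [Complex.norm_real, Real.norm_of_nonneg (h0 u)]
        exact hC u
    have hi3 : ∫ u in Ioi (0:ℝ), Complex.exp (-z * u) = 1 / z := by
      rw [integral_exp_mul_complex_Ioi (by simpa using hz)]
      simp
    simp only [Complex.ofReal_sub, sub_mul]
    rw [integral_sub hi2 (hi1.const_mul _), integral_const_mul, hi3, ← hcv]
    rw [hEq, hL]
    push_cast
    rw [add_sub_cancel_left]
    field_simp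
    ring
  · intro u v huv
    rw [mul_assoc, ← Real.exp_add]
    rw [show -u + -(v - u) = -v by ring]
    gcongr
    exact psiA_mono a (Real.exp_le_exp.mpr huv)

theorem pnt_ap_nat {q : ℕ} [NeZero q] (a : ZMod q) (ha : IsUnit a) :
    Tendsto (fun n : ℕ => (∑ k ∈ Finset.Icc 1 n, residueClass a k) / n) atTop (𝓝 ((q.totient : ℝ)⁻¹)) := by
  have h1 := (pnt_ap a ha).comp (Real.tendsto_log_atTop.comp tendsto_natCast_atTop_atTop)
  refine h1.congr' ?_
  filter_upwards [eventually_gt_atTop 0] with n hn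
  have hn' : (0:ℝ) < n := by exact_mod_cast hn
  simp only [Function.comp]
  rw [Real.exp_neg, Real.exp_log hn']
  simp [psiA, div_eq_mul_inv]

/-- The PNT for functions of the residue class. -/
theorem pnt_weighted {q : ℕ} [NeZero q] (H : ZMod q → ℂ) :
    Tendsto (fun n : ℕ => (∑ k ∈ Finset.Icc 1 n, H k * (vonMangoldt k : ℂ)) / n) atTop
      (𝓝 ((q.totient : ℂ)⁻¹ * ∑ u : (ZMod q)ˣ, H u)) := by
  classical
  -- each class
  have hres : ∀ (a : ZMod q) (k : ℕ), residueClass a k = if (k : ZMod q) = a then vonMangoldt k else 0 := by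
    intro a k
    simp [residueClass, Set.indicator_apply]
  have htot : ∀ k : ℕ, vonMangoldt k = ∑ a : ZMod q, residueClass a k := by
    intro k
    simp [hres]
  have hψ : Tendsto (fun n : ℕ => (∑ k ∈ Finset.Icc 1 n, vonMangoldt k) / n) atTop (𝓝 (1:ℝ)) := by
    have := pnt_ap_nat (q := 1) (1 : ZMod 1) isUnit_one
    simp only [Nat.totient_one, Nat.cast_one, inv_one] at this
    refine this.congr fun n => ?_
    congr 1
    apply Finset.sum_congr rfl
    intro k _
    rw [residueClass, Set.indicator_apply, if_pos]
    exact Subsingleton.elim _ _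
  have hsplit : ∀ n : ℕ, (∑ k ∈ Finset.Icc 1 n, vonMangoldt k) / (n:ℝ)
      = ∑ a : ZMod q, (∑ k ∈ Finset.Icc 1 n, residueClass a k) / (n:ℝ) := by
    intro n
    rw [← Finset.sum_div, Finset.sum_comm]
    congr 1
    apply Finset.sum_congr rfl
    intro k _
    exact htot k
  have hcardu : (Finset.univ.filter (fun a : ZMod q => IsUnit a)).card = q.totient := by
    rw [← ZMod.card_units_eq_totient q, ← Finset.card_univ]
    refine (Finset.card_bij (fun (u : (ZMod q)ˣ) _ => (u : ZMod q)) ?_ ?_ ?_).symm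
    · intro u _; simp
    · intro u _ v _ h; exact Units.ext h
    · intro b hb
      simp at hb
      obtain ⟨u, rfl⟩ := hb
      exact ⟨u, by simp, rfl⟩
  have hunits : Tendsto (fun n : ℕ => ∑ a ∈ Finset.univ.filter (fun a : ZMod q => IsUnit a),
      (∑ k ∈ Finset.Icc 1 n, residueClass a k) / (n:ℝ)) atTop (𝓝 1) := by
    have := tendsto_finsetSum (Finset.univ.filter (fun a : ZMod q => IsUnit a))
      (fun a ha => pnt_ap_nat a (Finset.mem_filter.mp ha).2)
    simp only [Finset.sum_const, hcardu, nsmul_eq_mul] at this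
    rwa [mul_inv_cancel₀] at this
    exact_mod_cast (Nat.totient_pos.mpr (NeZero.pos q)).ne'
  have hnon : Tendsto (fun n : ℕ => ∑ a ∈ Finset.univ.filter (fun a : ZMod q => ¬ IsUnit a),
      (∑ k ∈ Finset.Icc 1 n, residueClass a k) / (n:ℝ)) atTop (𝓝 0) := by
    have := hψ.sub hunits
    rw [sub_self] at this
    refine this.congr fun n => ?_
    rw [hsplit, ← Finset.sum_filter_add_sum_filter_not Finset.univ (fun a : ZMod q => IsUnit a)]
    ring
  have hcl : ∀ a : ZMod q, Tendsto (fun n : ℕ => (∑ k ∈ Finset.Icc 1 n, residueClass a k) / (n:ℝ)) atTop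
      (𝓝 (if IsUnit a then (q.totient : ℝ)⁻¹ else 0)) := by
    intro a
    split_ifs with ha
    · exact pnt_ap_nat a ha
    · refine squeeze_zero ?_ ?_ hnon
      · intro n
        exact div_nonneg (Finset.sum_nonneg fun k _ => residueClass_nonneg a k) (by positivity)
      · intro n
        apply Finset.single_le_sum (f := fun a : ZMod q => (∑ k ∈ Finset.Icc 1 n, residueClass a k) / (n:ℝ))
        · intro b _
          exact div_nonneg (Finset.sum_nonneg fun k _ => residueClass_nonneg b k) (by positivity)
        · simp [ha]
  have hfin := tendsto_finsetSum Finset.univ (fun (a : ZMod q) _ =>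
    ((Complex.continuous_ofReal.tendsto _).comp (hcl a)).const_mul (H a))
  have e1 : (∑ a : ZMod q, H a * (((if IsUnit a then (q.totient : ℝ)⁻¹ else 0 : ℝ)) : ℂ))
      = (q.totient : ℂ)⁻¹ * ∑ u : (ZMod q)ˣ, H u := by
    rw [Finset.mul_sum]
    have : ∑ u : (ZMod q)ˣ, (q.totient : ℂ)⁻¹ * H u
        = ∑ a ∈ Finset.univ.filter (fun a : ZMod q => IsUnit a), (q.totient : ℂ)⁻¹ * H a := by
      refine Finset.sum_bij (fun (u : (ZMod q)ˣ) _ => (u : ZMod q)) ?_ ?_ ?_ ?_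
      · intro u _; simp
      · intro u _ v _ h; exact Units.ext h
      · intro b hb
        simp at hb
        obtain ⟨u, rfl⟩ := hb
        exact ⟨u, by simp, rfl⟩
      · intro u _; rfl
    rw [this, Finset.sum_filter]
    apply Finset.sum_congr rfl
    intro a _
    split_ifs <;> simp [mul_comm]
  rw [e1] at hfin
  refine hfin.congr fun n => ?_
  simp only [Function.comp]
  push_cast
  simp_rw [mul_div_assoc', Finset.mul_sum]
  rw [← Finset.sum_div, Finset.sum_comm]
  congr 1
  apply Finset.sum_congr rfl
  intro k _
  simp only [hres]
  simp [apply_ite]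

end

section
open Filter Topology Finset
open ArithmeticFunction (vonMangoldt)

lemma sum_divisors_swap (f : ℕ → ℕ → ℂ) (x : ℕ) :
    ∑ n ∈ Icc 1 x, ∑ d ∈ n.divisors, f d (n / d) = ∑ d ∈ Icc 1 x, ∑ m ∈ Icc 1 (x / d), f d m := by
  rw [Finset.sum_sigma', Finset.sum_sigma']
  refine Finset.sum_nbij' (fun p => ⟨p.2, p.1 / p.2⟩) (fun p => ⟨p.1 * p.2, p.1⟩) ?_ ?_ ?_ ?_ ?_
  · rintro ⟨n, d⟩ h
    simp only [mem_sigma, mem_Icc, Nat.mem_divisors] at h ⊢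
    obtain ⟨⟨h1, h2⟩, h3, h4⟩ := h
    have hd : 0 < d := Nat.pos_of_dvd_of_pos h3 h1
    have hdn := Nat.le_of_dvd h1 h3
    refine ⟨⟨hd, hdn.trans h2⟩, Nat.div_pos hdn hd, Nat.div_le_div_right h2⟩
  · rintro ⟨d, m⟩ h
    simp only [mem_sigma, mem_Icc, Nat.mem_divisors] at h ⊢
    obtain ⟨⟨h1, h2⟩, h3, h4⟩ := h
    have : d * m ≤ x := by
      have := Nat.mul_le_mul_left d h4
      exact this.trans (Nat.mul_div_le x d)
    have hp : 0 < d * m := Nat.mul_pos h1 h3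
    exact ⟨⟨hp, this⟩, dvd_mul_right d m, hp.ne'⟩
  · rintro ⟨n, d⟩ h
    simp only [mem_sigma, mem_Icc, Nat.mem_divisors] at h
    simp [Nat.mul_div_cancel' h.2.1]
  · rintro ⟨d, m⟩ h
    simp only [mem_sigma, mem_Icc] at h
    simp [Nat.mul_div_cancel_left m h.1.1]
  · rintro ⟨n, d⟩ h
    rfl

structure Dom (q : ℕ) (h : ℕ → ℂ) (H : ZMod q → ℂ) (g : ℕ → ℝ) : Prop where
  mul : ∀ m n : ℕ, Nat.Coprime m n → h (m * n) = h m * h n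
  prime : ∀ p : ℕ, p.Prime → h p = H p
  le : ∀ n, ‖h n‖ ≤ g n
  g_le : ∀ n, g n ≤ 1
  g_one : g 1 = 1
  H_le : ∀ u, ‖H u‖ ≤ 1

noncomputable def bb (d : ℕ) : ℝ := vonMangoldt d * (if d.Prime then 1 / (d:ℝ)^2 else 1 / (d:ℝ) : ℝ)

lemma bb_nonneg (d : ℕ) : 0 ≤ bb d := by
  unfold bb
  have := ArithmeticFunction.vonMangoldt_nonneg (n := d)
  split_ifs <;> positivity

lemma bb_summable : Summable bb := by
  have h1 := ArithmeticFunction.vonMangoldt.summable_residueClass_non_primes_div (q := 1) 1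
  have h2 : Summable (fun d : ℕ => vonMangoldt d * (1 / (d:ℝ)^2)) := by
    have := (ArithmeticFunction.LSeriesSummable_vonMangoldt (s := 2) (by norm_num)).norm
    refine this.congr fun d => ?_
    unfold LSeries.term
    split_ifs with hd
    · subst hd; simp
    · rw [norm_div, Complex.norm_real, Real.norm_of_nonneg ArithmeticFunction.vonMangoldt_nonneg]
      rw [show (2:ℂ) = ((2:ℕ):ℂ) by norm_num, Complex.cpow_natCast]
      simp [div_eq_mul_inv]
  refine Summable.of_nonneg_of_le bb_nonneg (fun d => ?_) (h1.add h2)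
  unfold bb
  have h0 := ArithmeticFunction.vonMangoldt_nonneg (n := d)
  have hr : ArithmeticFunction.vonMangoldt.residueClass (1 : ZMod 1) d = vonMangoldt d := by
    rw [ArithmeticFunction.vonMangoldt.residueClass, Set.indicator_apply, if_pos]
    exact Subsingleton.elim _ _
  rw [hr]
  split_ifs with hp
  · simp
  · have : 0 ≤ vonMangoldt d * (1 / (d:ℝ)^2) := by positivity
    rw [← div_eq_mul_one_div]
    linarith

variable {q : ℕ} {h : ℕ → ℂ} {H : ZMod q → ℂ} {g : ℕ → ℝ}

lemma Dom.g_nonneg (D : Dom q h H g) (n : ℕ) : 0 ≤ g n := (norm_nonneg _).trans (D.le n)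

lemma Dom.h_le (D : Dom q h H g) (n : ℕ) : ‖h n‖ ≤ 1 := (D.le n).trans (D.g_le n)

lemma Dom.diff1 (D : Dom q h H g) (x d : ℕ) (hd : 0 < d) :
    ‖∑ m ∈ Icc 1 (x / d), (h (d * m) - h m * H d)‖ ≤ 2 * ∑ n ∈ Icc 1 x, g n := by
  have h1 : ∑ m ∈ Icc 1 (x / d), g (d * m) ≤ ∑ n ∈ Icc 1 x, g n := by
    rw [← Finset.sum_image (s := Icc 1 (x / d)) (g := fun m => d * m) (f := g)]
    · apply Finset.sum_le_sum_of_subset_of_nonneg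
      · intro n hn
        simp only [mem_image, mem_Icc] at hn ⊢
        obtain ⟨m, ⟨h1, h2⟩, rfl⟩ := hn
        exact ⟨Nat.mul_pos hd h1, (Nat.mul_le_mul_left d h2).trans (Nat.mul_div_le x d)⟩
      · intro n _ _; exact D.g_nonneg n
    · intro a _ b _ hab
      exact Nat.eq_of_mul_eq_mul_left hd hab
  have h2 : ∑ m ∈ Icc 1 (x / d), g m ≤ ∑ n ∈ Icc 1 x, g n := by
    apply Finset.sum_le_sum_of_subset_of_nonneg
    · exact Icc_subset_Icc_right (Nat.div_le_self x d)
    · intro n _ _; exact D.g_nonneg n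
  calc _ ≤ ∑ m ∈ Icc 1 (x / d), (g (d * m) + g m) := by
        refine (norm_sum_le _ _).trans (Finset.sum_le_sum fun m _ => ?_)
        refine (norm_sub_le _ _).trans (add_le_add (D.le _) ?_)
        rw [norm_mul]
        calc _ ≤ g m * 1 := mul_le_mul (D.le m) (D.H_le _) (norm_nonneg _) (D.g_nonneg m)
          _ = g m := mul_one _
    _ ≤ _ := by rw [Finset.sum_add_distrib]; linarith

lemma Dom.diff2 (D : Dom q h H g) (x d : ℕ) (hd : 0 < d) :
    vonMangoldt d * ‖∑ m ∈ Icc 1 (x / d), (h (d * m) - h m * H d)‖ ≤ 2 * x * bb d := by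
  have hΛ := ArithmeticFunction.vonMangoldt_nonneg (n := d)
  have hterm : ∀ m, ‖h (d * m) - h m * H d‖ ≤ 2 := by
    intro m
    refine (norm_sub_le _ _).trans ?_
    rw [norm_mul]
    have := mul_le_mul (D.h_le m) (D.H_le d) (norm_nonneg _) zero_le_one
    linarith [D.h_le (d * m)]
  have hxd : ((x / d : ℕ) : ℝ) ≤ x / d := Nat.cast_div_le
  have hd' : (0:ℝ) < d := by exact_mod_cast hd
  suffices hs : ‖∑ m ∈ Icc 1 (x / d), (h (d * m) - h m * H d)‖ ≤
      2 * x * (if d.Prime then 1 / (d:ℝ)^2 else 1 / (d:ℝ) : ℝ) by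
    calc _ ≤ vonMangoldt d * (2 * x * (if d.Prime then 1 / (d:ℝ)^2 else 1 / (d:ℝ) : ℝ)) := by gcongr
      _ = _ := by unfold bb; ring
  split_ifs with hp
  · calc ‖∑ m ∈ Icc 1 (x / d), (h (d * m) - h m * H d)‖
        ≤ ∑ m ∈ Icc 1 (x / d), (if d ∣ m then (2:ℝ) else 0) := by
          refine (norm_sum_le _ _).trans (Finset.sum_le_sum fun m _ => ?_)
          split_ifs with hm
          · exact hterm m
          · rw [D.mul d m ((Nat.Prime.coprime_iff_not_dvd hp).mpr hm), D.prime d hp]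
            simp [mul_comm]
      _ = 2 * ((x / d / d : ℕ) : ℝ) := by
          rw [← Finset.sum_filter, Finset.sum_const, nsmul_eq_mul]
          have : Icc 1 (x / d) = Ioc 0 (x / d) := rfl
          rw [this, Nat.Ioc_filter_dvd_card_eq_div]
          ring
      _ ≤ 2 * x * (1 / (d:ℝ)^2) := by
          have : ((x / d / d : ℕ) : ℝ) ≤ ((x / d : ℕ) : ℝ) / d := Nat.cast_div_le
          have h3 : ((x / d : ℕ) : ℝ) / d ≤ (x / d) / d := by gcongr
          have h4 : (x / d : ℝ) / d = x * (1 / (d:ℝ)^2) := by field_simp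
          rw [mul_assoc]
          linarith
  · calc ‖∑ m ∈ Icc 1 (x / d), (h (d * m) - h m * H d)‖
        ≤ ∑ m ∈ Icc 1 (x / d), (2:ℝ) := (norm_sum_le _ _).trans (Finset.sum_le_sum fun m _ => hterm m)
      _ = 2 * ((x / d : ℕ) : ℝ) := by simp [mul_comm]
      _ ≤ 2 * x * (1 / d) := by
          have : (x:ℝ) / d = x * (1 / d) := by field_simp
          rw [mul_assoc]; linarith

lemma Dom.log_sum (D : Dom q h H g) (ε : ℝ) (hε : 0 < ε) : ∃ C : ℝ, 0 ≤ C ∧ ∀ x : ℕ,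
    ‖∑ n ∈ Icc 1 x, h n * (Real.log n : ℂ) -
      ∑ m ∈ Icc 1 x, h m * ∑ d ∈ Icc 1 (x / m), H d * (vonMangoldt d : ℂ)‖
      ≤ ε * x + C * ∑ n ∈ Icc 1 x, g n := by
  have hs := summable_iff_vanishing_norm.mp bb_summable (ε / 2) (by positivity)
  obtain ⟨s, hs⟩ := hs
  refine ⟨∑ d ∈ s, vonMangoldt d * 2, Finset.sum_nonneg fun d _ => mul_nonneg ArithmeticFunction.vonMangoldt_nonneg (by norm_num), fun x => ?_⟩
  have hN : 0 ≤ ∑ n ∈ Icc 1 x, g n := Finset.sum_nonneg fun n _ => D.g_nonneg n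
  have e1 : ∑ n ∈ Icc 1 x, h n * (Real.log n : ℂ) =
      ∑ d ∈ Icc 1 x, ∑ m ∈ Icc 1 (x / d), h (d * m) * (vonMangoldt d : ℂ) := by
    rw [← sum_divisors_swap (fun d m => h (d * m) * (vonMangoldt d : ℂ))]
    refine Finset.sum_congr rfl fun n hn => ?_
    rw [← ArithmeticFunction.vonMangoldt_sum]
    push_cast
    rw [Finset.mul_sum]
    refine Finset.sum_congr rfl fun d hd => ?_
    rw [Nat.mul_div_cancel' (Nat.dvd_of_mem_divisors hd)]
  have e2 : ∑ m ∈ Icc 1 x, h m * ∑ d ∈ Icc 1 (x / m), H d * (vonMangoldt d : ℂ) =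
      ∑ d ∈ Icc 1 x, ∑ m ∈ Icc 1 (x / d), h m * H d * (vonMangoldt d : ℂ) := by
    simp_rw [Finset.mul_sum]
    rw [Finset.sum_sigma', Finset.sum_sigma']
    refine Finset.sum_nbij' (fun p => ⟨p.2, p.1⟩) (fun p => ⟨p.2, p.1⟩) ?_ ?_ ?_ ?_ ?_
    iterate 2
      rintro ⟨n, d⟩ h
      simp only [mem_sigma, mem_Icc] at h ⊢
      obtain ⟨⟨h1, h2⟩, h3, h4⟩ := h
      refine ⟨⟨h3, h4.trans (Nat.div_le_self _ _)⟩, h1, ?_⟩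
      rw [Nat.le_div_iff_mul_le h3]
      rw [Nat.le_div_iff_mul_le h1] at h4
      rwa [mul_comm]
    · rintro ⟨n, d⟩ h; rfl
    · rintro ⟨n, d⟩ h; rfl
    · rintro ⟨n, d⟩ h; simp only; ring
  rw [e1, e2, ← Finset.sum_sub_distrib]
  calc _ ≤ ∑ d ∈ Icc 1 x, vonMangoldt d * ‖∑ m ∈ Icc 1 (x / d), (h (d * m) - h m * H d)‖ := by
        refine (norm_sum_le _ _).trans (Finset.sum_le_sum fun d _ => ?_)
        rw [← Finset.sum_sub_distrib]
        simp_rw [← sub_mul]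
        rw [← Finset.sum_mul, norm_mul, Complex.norm_real,
          Real.norm_of_nonneg ArithmeticFunction.vonMangoldt_nonneg, mul_comm]
    _ ≤ ∑ d ∈ Icc 1 x, ((if d ∈ s then vonMangoldt d * 2 * ∑ n ∈ Icc 1 x, g n else 0)
          + (if d ∈ s then 0 else 2 * x * bb d)) := by
        refine Finset.sum_le_sum fun d hd => ?_
        have hd' : 0 < d := (mem_Icc.mp hd).1
        split_ifs with hds
        · rw [add_zero, mul_assoc]
          exact mul_le_mul_of_nonneg_left (D.diff1 x d hd') ArithmeticFunction.vonMangoldt_nonneg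
        · rw [zero_add]
          exact D.diff2 x d hd'
    _ ≤ _ := by
        rw [Finset.sum_add_distrib, add_comm]
        apply add_le_add
        · have e3 : ∑ d ∈ Icc 1 x, (if d ∈ s then 0 else 2 * x * bb d) =
              ∑ d ∈ (Icc 1 x).filter (fun d => d ∉ s), 2 * x * bb d := by
            rw [Finset.sum_filter]
            refine Finset.sum_congr rfl fun d _ => ?_
            by_cases hds : d ∈ s <;> simp [hds]
          rw [e3, ← Finset.mul_sum]
          have h3 := hs ((Icc 1 x).filter (fun d => d ∉ s)) (by
            rw [Finset.disjoint_left]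
            intro d hd
            exact (mem_filter.mp hd).2)
          rw [Real.norm_of_nonneg (Finset.sum_nonneg fun d _ => bb_nonneg d)] at h3
          have : (0:ℝ) ≤ x := by positivity
          nlinarith
        · rw [← Finset.sum_filter, Finset.sum_mul]
          apply Finset.sum_le_sum_of_subset_of_nonneg
          · intro d hd
            exact (mem_filter.mp hd).2
          · intro d _ _
            exact mul_nonneg (mul_nonneg ArithmeticFunction.vonMangoldt_nonneg (by norm_num)) hN

end

section
open Filter Topology Finset
open ArithmeticFunction (vonMangoldt)

lemma abel_div {K : Type*} [Field K] [CharZero K] (a : ℕ → K) (x : ℕ) :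
    ∑ n ∈ Icc 1 x, a n / n = (∑ n ∈ Icc 1 x, a n) / x +
      ∑ n ∈ Ico 1 x, (∑ k ∈ Icc 1 n, a k) / ((n:K) * (n + 1)) := by
  induction x with
  | zero => simp
  | succ x ih =>
    rcases Nat.eq_zero_or_pos x with rfl | hx
    · simp
    rw [Finset.sum_Icc_succ_top (by omega), Finset.sum_Icc_succ_top (by omega),
      Finset.sum_Ico_succ_top hx, ih]
    have h1 : (x:K) ≠ 0 := by exact_mod_cast hx.ne'
    have h2 : (x:K) + 1 ≠ 0 := by exact_mod_cast x.succ_ne_zero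
    push_cast
    field_simp
    ring

lemma log_le_eps (ε : ℝ) (hε : 0 < ε) : ∃ C : ℝ, 0 ≤ C ∧ ∀ y : ℝ, 0 < y → Real.log y ≤ ε * y + C := by
  refine ⟨|Real.log ε|, abs_nonneg _, fun y hy => ?_⟩
  have h1 := Real.log_le_sub_one_of_pos (mul_pos hε hy)
  rw [Real.log_mul hε.ne' hy.ne'] at h1
  have := neg_abs_le (Real.log ε)
  linarith

section
variable {q : ℕ} {h : ℕ → ℂ} {H : ZMod q → ℂ} {g : ℕ → ℝ}

lemma Dom.G_ge_one (D : Dom q h H g) (x : ℕ) (hx : 1 ≤ x) : 1 ≤ ∑ n ∈ Icc 1 x, g n / n := by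
  calc (1:ℝ) = g 1 / (1:ℕ) := by simp [D.g_one]
    _ ≤ _ := Finset.single_le_sum (f := fun n : ℕ => g n / n)
      (fun n _ => div_nonneg (D.g_nonneg n) (by positivity)) (mem_Icc.mpr ⟨le_rfl, hx⟩)

lemma Dom.keyB (D : Dom q h H g) {β : ℂ}
    (hβ : Tendsto (fun n:ℕ => (∑ k ∈ Icc 1 n, H k * (vonMangoldt k : ℂ)) / n) atTop (𝓝 β))
    (ε : ℝ) (hε : 0 < ε) : ∃ C : ℝ, 0 ≤ C ∧ ∀ x : ℕ, 1 ≤ x →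
    ‖(∑ n ∈ Icc 1 x, h n) * (Real.log x : ℂ) - β * x * ∑ n ∈ Icc 1 x, h n / n‖ ≤
      ε * (x * ∑ n ∈ Icc 1 x, g n / n) + C * ∑ n ∈ Icc 1 x, g n := by
  obtain ⟨C1, hC1, h1⟩ := D.log_sum (ε / 3) (by positivity)
  obtain ⟨C2, hC2, h2⟩ := log_le_eps (ε / 3) (by positivity)
  obtain ⟨C3, hC3, h3⟩ : ∃ C : ℝ, 0 ≤ C ∧ ∀ n : ℕ,
      ‖∑ k ∈ Icc 1 n, H k * (vonMangoldt k : ℂ) - β * n‖ ≤ ε / 3 * n + C := by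
    rw [Metric.tendsto_atTop] at hβ
    obtain ⟨N, hN⟩ := hβ (ε / 3) (by positivity)
    refine ⟨∑ n ∈ range (N + 1), ‖∑ k ∈ Icc 1 n, H k * (vonMangoldt k : ℂ) - β * n‖,
      Finset.sum_nonneg fun _ _ => norm_nonneg _, fun n => ?_⟩
    have hs : 0 ≤ ∑ n ∈ range (N + 1), ‖∑ k ∈ Icc 1 n, H k * (vonMangoldt k : ℂ) - β * n‖ :=
      Finset.sum_nonneg fun _ _ => norm_nonneg _
    rcases lt_or_ge N n with hn | hn
    · have h4 := hN n hn.le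
      have hn0 : (0:ℝ) < n := by exact_mod_cast (Nat.zero_le N).trans_lt hn
      have hn1 : (n:ℂ) ≠ 0 := by exact_mod_cast hn0.ne'
      rw [dist_eq_norm] at h4
      have : ∑ k ∈ Icc 1 n, H k * (vonMangoldt k : ℂ) - β * n =
          ((∑ k ∈ Icc 1 n, H k * (vonMangoldt k : ℂ)) / n - β) * n := by field_simp
      rw [this, norm_mul, Complex.norm_natCast]
      have := mul_le_mul_of_nonneg_right h4.le hn0.le
      linarith
    · have := Finset.single_le_sum
        (f := fun n : ℕ => ‖∑ k ∈ Icc 1 n, H k * (vonMangoldt k : ℂ) - β * n‖)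
        (fun n _ => norm_nonneg _) (mem_range.mpr (Nat.lt_succ_of_le hn))
      have h5 : 0 ≤ ε / 3 * n := by positivity
      linarith
  refine ⟨C1 + C2 + (C3 + ‖β‖), by positivity, fun x hx => ?_⟩
  have hx0 : (0:ℝ) < x := by exact_mod_cast hx
  set N := ∑ n ∈ Icc 1 x, g n with hN
  set G := ∑ n ∈ Icc 1 x, g n / n with hG
  have hG1 : 1 ≤ G := D.G_ge_one x hx
  -- step 1
  have s1 : ‖(∑ n ∈ Icc 1 x, h n) * (Real.log x : ℂ) - ∑ n ∈ Icc 1 x, h n * (Real.log n : ℂ)‖ ≤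
      ε / 3 * (x * G) + C2 * N := by
    rw [Finset.sum_mul, ← Finset.sum_sub_distrib, hG, hN, Finset.mul_sum, Finset.mul_sum,
      Finset.mul_sum, ← Finset.sum_add_distrib]
    refine (norm_sum_le _ _).trans (Finset.sum_le_sum fun n hn => ?_)
    obtain ⟨hn1, hn2⟩ := mem_Icc.mp hn
    have hn0 : (0:ℝ) < n := by exact_mod_cast hn1
    have hnx : (n:ℝ) ≤ x := by exact_mod_cast hn2
    rw [← mul_sub, ← Complex.ofReal_sub, norm_mul, Complex.norm_real, ← Real.log_div hx0.ne' hn0.ne',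
      Real.norm_of_nonneg (Real.log_nonneg (by rw [le_div_iff₀ hn0]; linarith))]
    calc _ ≤ g n * (ε / 3 * (x / n) + C2) :=
          mul_le_mul (D.le n) (h2 _ (by positivity))
            (Real.log_nonneg (by rw [le_div_iff₀ hn0]; linarith)) (D.g_nonneg n)
      _ = _ := by field_simp
  have s3 : ‖∑ m ∈ Icc 1 x, h m * ∑ d ∈ Icc 1 (x / m), H d * (vonMangoldt d : ℂ)
      - β * x * ∑ n ∈ Icc 1 x, h n / n‖ ≤ ε / 3 * (x * G) + (C3 + ‖β‖) * N := by
    rw [Finset.mul_sum, ← Finset.sum_sub_distrib, hG, hN, Finset.mul_sum, Finset.mul_sum,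
      Finset.mul_sum, ← Finset.sum_add_distrib]
    refine (norm_sum_le _ _).trans (Finset.sum_le_sum fun n hn => ?_)
    obtain ⟨hn1, hn2⟩ := mem_Icc.mp hn
    have hn0 : (0:ℝ) < n := by exact_mod_cast hn1
    have hn0' : (n:ℂ) ≠ 0 := by exact_mod_cast hn0.ne'
    have e : h n * ∑ d ∈ Icc 1 (x / n), H d * (vonMangoldt d : ℂ) - β * x * (h n / n) =
      h n * ((∑ d ∈ Icc 1 (x / n), H d * (vonMangoldt d : ℂ) - β * (x / n : ℕ)) -
        β * (((x:ℝ) / n - (x / n : ℕ) : ℝ) : ℂ)) := by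
      push_cast; field_simp; ring
    have hfl : ((x / n : ℕ) : ℝ) ≤ x / n := Nat.cast_div_le
    have hfl2 : (x:ℝ) / n - (x / n : ℕ) ≤ 1 := by
      have h6 : (x:ℝ) / n < (x / n : ℕ) + 1 := by
        rw [div_lt_iff₀ hn0]
        exact_mod_cast Nat.lt_mul_of_div_lt (Nat.lt_succ_self (x / n)) hn1
      linarith
    rw [e, norm_mul]
    calc _ ≤ g n * (ε / 3 * (x / n) + (C3 + ‖β‖)) := by
          refine mul_le_mul (D.le n) ?_ (norm_nonneg _) (D.g_nonneg n)
          refine (norm_sub_le _ _).trans ?_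
          rw [norm_mul, Complex.norm_real, Real.norm_of_nonneg (by linarith)]
          have h7 := h3 (x / n)
          have h8 : ‖β‖ * ((x:ℝ) / n - (x / n : ℕ)) ≤ ‖β‖ * 1 :=
            mul_le_mul_of_nonneg_left hfl2 (norm_nonneg _)
          have h9 : ε / 3 * ((x / n : ℕ):ℝ) ≤ ε / 3 * (x / n) := by gcongr
          linarith
      _ = _ := by field_simp
  have s2 := h1 x
  have hh : ε / 3 * x ≤ ε / 3 * (x * G) := by
    have : (x:ℝ) ≤ x * G := by nlinarith
    gcongr
  calc _ ≤ ‖(∑ n ∈ Icc 1 x, h n) * (Real.log x : ℂ) - ∑ n ∈ Icc 1 x, h n * (Real.log n : ℂ)‖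
      + ‖∑ n ∈ Icc 1 x, h n * (Real.log n : ℂ) -
      ∑ m ∈ Icc 1 x, h m * ∑ d ∈ Icc 1 (x / m), H d * (vonMangoldt d : ℂ)‖ +
      ‖∑ m ∈ Icc 1 x, h m * ∑ d ∈ Icc 1 (x / m), H d * (vonMangoldt d : ℂ)
      - β * x * ∑ n ∈ Icc 1 x, h n / n‖ := by
        refine le_trans (le_of_eq ?_) (norm_add₃_le)
        congr 1; ring
    _ ≤ _ := by linarith

/-- `N = o(xG)` -/
lemma Dom.keyC {Hg : ZMod q → ℂ} (Dg : Dom q (fun n => (g n : ℂ)) Hg g) {α : ℂ}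
    (hα : Tendsto (fun n:ℕ => (∑ k ∈ Icc 1 n, Hg k * (vonMangoldt k : ℂ)) / n) atTop (𝓝 α))
    (ε : ℝ) (hε : 0 < ε) : ∀ᶠ x : ℕ in atTop,
      ∑ n ∈ Icc 1 x, g n ≤ ε * (x * ∑ n ∈ Icc 1 x, g n / n) := by
  obtain ⟨C, hC, h1⟩ := Dg.keyB hα 1 one_pos
  have hl : Tendsto (fun x : ℕ => Real.log x) atTop atTop :=
    Real.tendsto_log_atTop.comp tendsto_natCast_atTop_atTop
  filter_upwards [hl.eventually_ge_atTop (C + (‖α‖ + 1) / ε), eventually_ge_atTop 1] with x hx hx1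
  have h2 := h1 x hx1
  set N := ∑ n ∈ Icc 1 x, g n with hN
  set G := ∑ n ∈ Icc 1 x, g n / n with hG
  have hN0 : 0 ≤ N := Finset.sum_nonneg fun n _ => Dg.g_nonneg n
  have hG1 : 1 ≤ G := Dg.G_ge_one x hx1
  have e1 : (∑ n ∈ Icc 1 x, (g n : ℂ)) = (N : ℂ) := by rw [hN]; push_cast; rfl
  have e2 : (∑ n ∈ Icc 1 x, (g n : ℂ) / n) = (G : ℂ) := by rw [hG]; push_cast; rfl
  simp only [e1, e2] at h2
  have hl0 : 0 ≤ Real.log x := Real.log_natCast_nonneg x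
  have h3 : N * Real.log x ≤ ‖α‖ * (x * G) + (1 * (x * G) + C * N) := by
    have h4 : ‖(N:ℂ) * (Real.log x : ℂ)‖ = N * Real.log x := by
      rw [← Complex.ofReal_mul, Complex.norm_real, Real.norm_of_nonneg (by positivity)]
    have h5 : ‖α * x * G‖ = ‖α‖ * (x * G) := by
      rw [norm_mul, norm_mul, Complex.norm_real, Complex.norm_natCast,
        Real.norm_of_nonneg (by linarith)]; ring
    have := norm_sub_norm_le ((N:ℂ) * (Real.log x : ℂ)) (α * x * G)
    linarith
  have h6 : N * (C + (‖α‖ + 1) / ε) ≤ N * Real.log x := by gcongr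
  have h7 : N * ((‖α‖ + 1) / ε) ≤ (‖α‖ + 1) * (x * G) := by linarith
  have h8 : N * (‖α‖ + 1) ≤ (‖α‖ + 1) * (x * G) * ε := by
    rw [← mul_div_assoc, div_le_iff₀ hε] at h7; exact h7
  have h9 : 0 < ‖α‖ + 1 := by positivity
  refine le_of_mul_le_mul_left ?_ h9
  linarith

lemma Dom.keyD (D : Dom q h H g) {Hg : ZMod q → ℂ} (Dg : Dom q (fun n => (g n : ℂ)) Hg g) {α β : ℂ}
    (hα : Tendsto (fun n:ℕ => (∑ k ∈ Icc 1 n, Hg k * (vonMangoldt k : ℂ)) / n) atTop (𝓝 α))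
    (hβ : Tendsto (fun n:ℕ => (∑ k ∈ Icc 1 n, H k * (vonMangoldt k : ℂ)) / n) atTop (𝓝 β))
    (ε : ℝ) (hε : 0 < ε) : ∀ᶠ x : ℕ in atTop,
    ‖(∑ n ∈ Icc 1 x, h n) * (Real.log x : ℂ) - β * x * ∑ n ∈ Icc 1 x, h n / n‖ ≤
      ε * (x * ∑ n ∈ Icc 1 x, g n / n) := by
  obtain ⟨C, hC, h1⟩ := D.keyB hβ (ε / 2) (by positivity)
  filter_upwards [Dg.keyC hα (ε / 2 / (C + 1)) (by positivity), eventually_ge_atTop 1] with x hx hx1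
  have h2 := h1 x hx1
  have hN0 : 0 ≤ ∑ n ∈ Icc 1 x, g n := Finset.sum_nonneg fun n _ => Dg.g_nonneg n
  have h3 : C * ∑ n ∈ Icc 1 x, g n ≤ ε / 2 * (x * ∑ n ∈ Icc 1 x, g n / n) := by
    calc _ ≤ (C + 1) * ∑ n ∈ Icc 1 x, g n := by gcongr; linarith
      _ ≤ (C + 1) * (ε / 2 / (C + 1) * (x * ∑ n ∈ Icc 1 x, g n / n)) := by gcongr
      _ = _ := by field_simp
  linarith

lemma Dom.keyN {Hg : ZMod q → ℂ} (Dg : Dom q (fun n => (g n : ℂ)) Hg g) {α : ℝ}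
    (hα : Tendsto (fun n:ℕ => (∑ k ∈ Icc 1 n, Hg k * (vonMangoldt k : ℂ)) / n) atTop (𝓝 (α:ℂ)))
    (ε : ℝ) (hε : 0 < ε) : ∀ᶠ x : ℕ in atTop,
    (α - ε) * (x * ∑ n ∈ Icc 1 x, g n / n) ≤ (∑ n ∈ Icc 1 x, g n) * Real.log x := by
  filter_upwards [Dg.keyD Dg hα hα ε hε] with x hx
  set N := ∑ n ∈ Icc 1 x, g n with hN
  set G := ∑ n ∈ Icc 1 x, g n / n with hG
  have e1 : (∑ n ∈ Icc 1 x, (g n : ℂ)) = (N : ℂ) := by rw [hN]; push_cast; rfl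
  have e2 : (∑ n ∈ Icc 1 x, (g n : ℂ) / n) = (G : ℂ) := by rw [hG]; push_cast; rfl
  simp only [e1, e2] at hx
  have e3 : (N:ℂ) * (Real.log x : ℂ) - α * x * G = ((N * Real.log x - α * x * G : ℝ) : ℂ) := by
    push_cast; rfl
  rw [e3, Complex.norm_real, Real.norm_eq_abs] at hx
  have := (abs_le.mp hx).1
  linarith

lemma Dom.N_tendsto {Hg : ZMod q → ℂ} (Dg : Dom q (fun n => (g n : ℂ)) Hg g) {α : ℝ} (h0 : 0 < α)
    (hα : Tendsto (fun n:ℕ => (∑ k ∈ Icc 1 n, Hg k * (vonMangoldt k : ℂ)) / n) atTop (𝓝 (α:ℂ))) :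
    Tendsto (fun x : ℕ => ∑ n ∈ Icc 1 x, g n) atTop atTop := by
  have h1 : Tendsto (fun x : ℝ => x / Real.log x) atTop atTop := by
    have := (Real.isLittleO_log_id_atTop).tendsto_div_nhds_zero
    have h2 : Tendsto (fun x : ℝ => Real.log x / x) atTop (𝓝[>] 0) := by
      rw [tendsto_nhdsWithin_iff]
      refine ⟨this, ?_⟩
      filter_upwards [eventually_gt_atTop 1] with x hx
      exact div_pos (Real.log_pos hx) (by linarith)
    have := h2.inv_tendsto_nhdsGT_zero
    refine this.congr fun x => ?_
    simp
  have h2 := (h1.comp tendsto_natCast_atTop_atTop).const_mul_atTop (show 0 < α / 2 by positivity)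
  refine tendsto_atTop_mono' _ ?_ h2
  filter_upwards [Dg.keyN hα (α / 2) (by positivity), eventually_ge_atTop 2] with x hx hx1
  have hx0 : (1:ℝ) < x := by exact_mod_cast hx1
  have hl : 0 < Real.log x := Real.log_pos hx0
  have hG := Dg.G_ge_one x (by omega)
  simp only [Function.comp]
  rw [← mul_div_assoc, div_le_iff₀ hl]
  have : (α / 2) * x * 1 ≤ (α / 2) * x * (∑ n ∈ Icc 1 x, g n / n) := by gcongr
  linarith

lemma loglog_step (n : ℕ) (hn : 2 ≤ n) :
    Real.log (Real.log (n + 1 : ℕ)) - Real.log (Real.log n) ≤ 1 / (n * Real.log n) := by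
  have hn0 : (1:ℝ) < n := by exact_mod_cast hn
  have hl : 0 < Real.log n := Real.log_pos hn0
  have hl1 : 0 < Real.log (n + 1 : ℕ) := Real.log_pos (by push_cast; linarith)
  rw [← Real.log_div hl1.ne' hl.ne']
  have h1 := Real.log_le_sub_one_of_pos (div_pos hl1 hl)
  have h2 : Real.log (n + 1 : ℕ) - Real.log n ≤ 1 / n := by
    rw [← Real.log_div (by positivity) (by positivity)]
    have := Real.log_le_sub_one_of_pos (show 0 < ((n + 1 : ℕ):ℝ) / n by positivity)
    refine this.trans (le_of_eq ?_)
    push_cast; field_simp; ring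
  refine h1.trans ?_
  have : Real.log (n + 1 : ℕ) / Real.log n - 1 = (Real.log (n + 1 : ℕ) - Real.log n) / Real.log n := by
    field_simp
  rw [this, div_le_iff₀ hl]
  refine h2.trans (le_of_eq ?_)
  field_simp

lemma Dom.G_tendsto {Hg : ZMod q → ℂ} (Dg : Dom q (fun n => (g n : ℂ)) Hg g) {α : ℝ} (h0 : 0 < α)
    (hα : Tendsto (fun n:ℕ => (∑ k ∈ Icc 1 n, Hg k * (vonMangoldt k : ℂ)) / n) atTop (𝓝 (α:ℂ))) :
    Tendsto (fun x : ℕ => ∑ n ∈ Icc 1 x, g n / n) atTop atTop := by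
  obtain ⟨T, hT⟩ := eventually_atTop.mp (Dg.keyN hα (α / 2) (by positivity))
  set T' := max T 2
  have hR : ∀ x, T' ≤ x → α / 2 * (Real.log (Real.log (x + 1 : ℕ)) - Real.log (Real.log (T' + 1 : ℕ))) ≤
      ∑ n ∈ Ico 1 x, (∑ k ∈ Icc 1 n, g k) / ((n:ℝ) * (n + 1)) := by
    intro x hx
    induction x, hx using Nat.le_induction with
    | base =>
      rw [sub_self, mul_zero]
      exact Finset.sum_nonneg fun n _ => div_nonneg (Finset.sum_nonneg fun n _ => Dg.g_nonneg n) (by positivity)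
    | succ x hx ih =>
      have hx2 : 2 ≤ x := (le_max_right _ _).trans hx
      have hxT : T ≤ x := (le_max_left _ _).trans hx
      rw [Finset.sum_Ico_succ_top (by omega)]
      have h1 := hT x hxT
      have hG := Dg.G_ge_one x (by omega)
      have h2 := loglog_step (x + 1) (by omega)
      have hx0 : (1:ℝ) < x := by exact_mod_cast hx2
      have hl : 0 < Real.log x := Real.log_pos hx0
      have hl1 : Real.log x ≤ Real.log (x + 1 : ℕ) := Real.log_le_log (by linarith) (by push_cast; linarith)
      have h3 : (α / 2) * x * 1 ≤ (α / 2) * x * (∑ n ∈ Icc 1 x, g n / n) := by gcongr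
      have h4 : α / 2 * x / Real.log x ≤ ∑ n ∈ Icc 1 x, g n := by
        rw [div_le_iff₀ hl]; linarith
      have h5 : α / 2 * (1 / ((x + 1 : ℕ) * Real.log (x + 1 : ℕ))) ≤
          (∑ k ∈ Icc 1 x, g k) / ((x:ℝ) * (x + 1)) := by
        calc _ ≤ α / 2 * (1 / ((x + 1 : ℕ) * Real.log x)) := by gcongr
          _ = (α / 2 * x / Real.log x) / ((x:ℝ) * (x + 1)) := by push_cast; field_simp
          _ ≤ _ := by gcongr
      have h6 := mul_le_mul_of_nonneg_left h2 (show 0 ≤ α / 2 by positivity)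
      linarith
  have hll : Tendsto (fun x : ℕ => α / 2 * (Real.log (Real.log (x + 1 : ℕ)) - Real.log (Real.log (T' + 1 : ℕ)))) atTop atTop := by
    apply Tendsto.const_mul_atTop (by positivity)
    apply tendsto_atTop_add_const_right
    exact Real.tendsto_log_atTop.comp (Real.tendsto_log_atTop.comp
      (tendsto_natCast_atTop_atTop.comp (tendsto_add_atTop_nat 1)))
  refine tendsto_atTop_mono' _ ?_ hll
  filter_upwards [eventually_ge_atTop T'] with x hx
  rw [abel_div]
  have : 0 ≤ (∑ n ∈ Icc 1 x, g n) / x := div_nonneg (Finset.sum_nonneg fun n _ => Dg.g_nonneg n) (by positivity)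
  linarith [hR x hx]

/-- the main analytic theorem -/
theorem Dom.little_o (D : Dom q h H g) {Hg : ZMod q → ℂ} (Dg : Dom q (fun n => (g n : ℂ)) Hg g)
    {α : ℝ} {β : ℂ} (h0 : 0 < α)
    (hα : Tendsto (fun n:ℕ => (∑ k ∈ Icc 1 n, Hg k * (vonMangoldt k : ℂ)) / n) atTop (𝓝 (α:ℂ)))
    (hβ : Tendsto (fun n:ℕ => (∑ k ∈ Icc 1 n, H k * (vonMangoldt k : ℂ)) / n) atTop (𝓝 β))
    (hlt : ‖β‖ < α) (η : ℝ) (hη : 0 < η) :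
    ∀ᶠ x : ℕ in atTop, ‖∑ n ∈ Icc 1 x, h n‖ ≤ η * ∑ n ∈ Icc 1 x, g n := by
  have hGt := Dg.G_tendsto h0 hα
  have PQ : ∀ ρ θ : ℝ, 0 ≤ ρ → 0 < θ → ‖β‖ * ρ < θ * α →
      (∀ᶠ x : ℕ in atTop, ‖∑ n ∈ Icc 1 x, h n / n‖ ≤ ρ * ∑ n ∈ Icc 1 x, g n / n) →
      ∀ᶠ x : ℕ in atTop, ‖∑ n ∈ Icc 1 x, h n‖ ≤ θ * ∑ n ∈ Icc 1 x, g n := by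
    intro ρ θ hρ hθ hρθ hP
    set ε := (θ * α - ‖β‖ * ρ) / (1 + θ) with hε
    have hε0 : 0 < ε := div_pos (by linarith) (by linarith)
    have hεe : ε * (1 + θ) = θ * α - ‖β‖ * ρ := by rw [hε]; field_simp
    filter_upwards [hP, D.keyD Dg hα hβ ε hε0, Dg.keyN hα ε hε0, eventually_ge_atTop 2] with
      x h1 h2 h3 hx2
    have hx0 : (1:ℝ) < x := by exact_mod_cast hx2
    have hl : 0 < Real.log x := Real.log_pos hx0
    have hG := Dg.G_ge_one x (by omega)
    set G := ∑ n ∈ Icc 1 x, g n / n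
    have h4 := (norm_sub_norm_le _ _).trans h2
    rw [norm_mul, norm_mul, norm_mul, Complex.norm_real, Complex.norm_natCast,
      Real.norm_of_nonneg hl.le] at h4
    have h5 : ‖β‖ * x * ‖∑ n ∈ Icc 1 x, h n / n‖ ≤ ‖β‖ * x * (ρ * G) := by gcongr
    have h6 := mul_le_mul_of_nonneg_left h3 hθ.le
    refine le_of_mul_le_mul_right ?_ hl
    have h7 : ‖β‖ * x * (ρ * G) + ε * (x * G) = θ * ((α - ε) * (x * G)) := by
      linear_combination (x * G) * hεe
    linarith
  have QP : ∀ θ ρ : ℝ, 0 ≤ θ → θ < ρ →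
      (∀ᶠ x : ℕ in atTop, ‖∑ n ∈ Icc 1 x, h n‖ ≤ θ * ∑ n ∈ Icc 1 x, g n) →
      (∀ᶠ x : ℕ in atTop, ‖∑ n ∈ Icc 1 x, h n / n‖ ≤ ρ * ∑ n ∈ Icc 1 x, g n / n) := by
    intro θ ρ hθ hρ hQ
    obtain ⟨T, hT⟩ := eventually_atTop.mp hQ
    set c : ℕ → ℝ := fun n => if n < T then ‖∑ k ∈ Icc 1 n, h k‖ / ((n:ℝ) * (n + 1)) else 0 with hc
    have hc0 : ∀ n, 0 ≤ c n := by
      intro n; rw [hc]; simp only; split_ifs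
      · positivity
      · exact le_rfl
    set CT := ∑ n ∈ range T, c n with hCT
    filter_upwards [hGt.eventually_ge_atTop (CT / (ρ - θ)), eventually_ge_atTop T] with x h1 hxT
    rw [div_le_iff₀ (by linarith)] at h1
    have hN0 : ∀ n : ℕ, 0 ≤ ∑ k ∈ Icc 1 n, g k := fun n => Finset.sum_nonneg fun n _ => Dg.g_nonneg n
    have h2 : ‖∑ n ∈ Icc 1 x, h n / n‖ ≤ θ * (∑ n ∈ Icc 1 x, g n / n) + CT := by
      rw [abel_div h, abel_div g]
      have hterm : ∀ n : ℕ, ‖(∑ k ∈ Icc 1 n, h k) / ((n:ℂ) * (n + 1))‖ ≤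
          θ * ((∑ k ∈ Icc 1 n, g k) / ((n:ℝ) * (n + 1))) + c n := by
        intro n
        have : ‖((n:ℂ) * (n + 1))‖ = (n:ℝ) * (n + 1) := by
          rw [show ((n:ℂ) * (n + 1)) = ((n * (n + 1) : ℕ) : ℂ) by push_cast; rfl, Complex.norm_natCast]
          push_cast; rfl
        rw [norm_div, this]
        rcases lt_or_ge n T with hn | hn
        · simp only [hc, if_pos hn]
          have : 0 ≤ θ * ((∑ k ∈ Icc 1 n, g k) / ((n:ℝ) * (n + 1))) :=
            mul_nonneg hθ (div_nonneg (hN0 n) (by positivity))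
          linarith
        · have := hT n hn
          rw [← mul_div_assoc]
          have h3 : ‖∑ k ∈ Icc 1 n, h k‖ / ((n:ℝ) * (n + 1)) ≤ (θ * ∑ k ∈ Icc 1 n, g k) / ((n:ℝ) * (n + 1)) := by gcongr
          linarith [hc0 n]
      have h3 : ∑ n ∈ Ico 1 x, c n ≤ CT := by
        calc _ ≤ ∑ n ∈ range x, c n := Finset.sum_le_sum_of_subset_of_nonneg
              (by intro n; simp) (fun n _ _ => hc0 n)
          _ = CT := by
            rw [hCT]
            symm
            apply Finset.sum_subset (by intro n; simp; omega)
            intro n _ hn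
            simp only [mem_range] at hn
            simp only [hc, if_neg hn]
      calc _ ≤ ‖(∑ n ∈ Icc 1 x, h n) / x‖ + ∑ n ∈ Ico 1 x, ‖(∑ k ∈ Icc 1 n, h k) / ((n:ℂ) * (n + 1))‖ :=
            (norm_add_le _ _).trans (add_le_add le_rfl (norm_sum_le _ _))
        _ ≤ θ * ((∑ n ∈ Icc 1 x, g n) / x) + ∑ n ∈ Ico 1 x, (θ * ((∑ k ∈ Icc 1 n, g k) / ((n:ℝ) * (n + 1))) + c n) := by
            refine add_le_add ?_ (Finset.sum_le_sum fun n _ => hterm n)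
            rw [norm_div, Complex.norm_natCast, ← mul_div_assoc]
            have := hT x hxT
            gcongr
        _ ≤ _ := by
            rw [Finset.sum_add_distrib, ← Finset.mul_sum, mul_add]
            linarith
    linarith
  have hP1 : ∀ᶠ x : ℕ in atTop, ‖∑ n ∈ Icc 1 x, h n / n‖ ≤ 1 * ∑ n ∈ Icc 1 x, g n / n := by
    refine Eventually.of_forall fun x => ?_
    rw [one_mul]
    refine (norm_sum_le _ _).trans (Finset.sum_le_sum fun n _ => ?_)
    rw [norm_div, Complex.norm_natCast]
    have := D.le n
    gcongr
  obtain ⟨r, hr1, hr2⟩ := exists_between ((div_lt_one h0).mpr hlt)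
  obtain ⟨s, hs1, hs2⟩ := exists_between hr2
  have hr0 : 0 < s := lt_of_le_of_lt (by positivity) (hr1.trans hs1)
  rw [div_lt_iff₀ h0] at hr1
  have hrr : 0 < r := by
    by_contra hneg
    have : r * α ≤ 0 := mul_nonpos_of_nonpos_of_nonneg (not_lt.mp hneg) h0.le
    linarith [norm_nonneg β]
  have hQk : ∀ ρ : ℝ, 0 < ρ → (∀ᶠ x : ℕ in atTop, ‖∑ n ∈ Icc 1 x, h n / n‖ ≤ ρ * ∑ n ∈ Icc 1 x, g n / n) →
      ∀ᶠ x : ℕ in atTop, ‖∑ n ∈ Icc 1 x, h n‖ ≤ (r * ρ) * ∑ n ∈ Icc 1 x, g n := by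
    intro ρ hρ hP
    refine PQ ρ (r * ρ) hρ.le (by positivity) ?_ hP
    nlinarith
  have hPk : ∀ k : ℕ, ∀ᶠ x : ℕ in atTop, ‖∑ n ∈ Icc 1 x, h n / n‖ ≤ s ^ k * ∑ n ∈ Icc 1 x, g n / n := by
    intro k
    induction k with
    | zero => simpa using hP1
    | succ k ih =>
      refine QP (r * s ^ k) (s ^ (k + 1)) (by positivity) ?_ (hQk _ (by positivity) ih)
      rw [pow_succ, mul_comm]
      gcongr
  obtain ⟨k, hk⟩ := exists_pow_lt_of_lt_one hη hs2
  filter_upwards [hQk (s ^ k) (by positivity) (hPk k)] with x hx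
  refine hx.trans ?_
  have hN0 : 0 ≤ ∑ k ∈ Icc 1 x, g k := Finset.sum_nonneg fun n _ => Dg.g_nonneg n
  have : r * s ^ k ≤ η := by
    have : 0 < s ^ k := by positivity
    nlinarith
  gcongr
end

end

section
open Polynomial

/-- If `F q' = n F' q` and `q` has small degree then `q = 0`. -/
lemma ode_zero {k : Type*} [Field k] {F : k[X]} (hcop : IsCoprime F (derivative F)) :
    ∀ (n : ℕ) (s : k[X]), (∀ i : ℕ, 1 ≤ i → i ≤ n → (i : k) ≠ 0) →
      F * derivative s = C (n : k) * derivative F * s → s.degree < (n * F.natDegree : ℕ) → s = 0 := by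
  intro n
  induction n with
  | zero =>
    intro s _ _ hdeg
    simpa using hdeg
  | succ n ih =>
    intro s hn hode hdeg
    by_cases hF : F = 0
    · subst hF; simpa using hdeg
    have hdvd : F ∣ s := by
      have h1 : F ∣ C ((n + 1 : ℕ) : k) * derivative F * s := ⟨_, hode.symm⟩
      rw [mul_assoc] at h1
      have hu : IsUnit (C ((n + 1 : ℕ) : k)) := by
        rw [isUnit_C]; exact (hn (n + 1) (by omega) le_rfl).isUnit
      rw [hu.dvd_mul_left] at h1
      exact hcop.dvd_of_dvd_mul_left h1
    obtain ⟨t, rfl⟩ := hdvd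
    have ht : F * derivative t = C (n : k) * derivative F * t := by
      apply mul_left_cancel₀ hF
      simp only [derivative_mul] at hode
      push_cast at hode
      simp only [map_add, map_natCast, map_one] at hode
      simp only [map_natCast]
      linear_combination hode
    have ht0 : t = 0 := by
      refine ih t (fun i h1 h2 => hn i h1 (by omega)) ht ?_
      rw [degree_mul, degree_eq_natDegree hF] at hdeg
      by_contra hcon
      push Not at hcon
      have : ((F.natDegree : ℕ) : WithBot ℕ) + (n * F.natDegree : ℕ) ≤ F.natDegree + t.degree := by gcongr
      have h2 := this.trans_lt hdeg
      rw [← Nat.cast_add, Nat.cast_lt] at h2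
      linarith
    simp [ht0]

section
variable {k : Type*} [Field k]

/-- auxiliary Stepanov coefficients -/
noncomputable def stc (F : k[X]) (m : ℕ) (c : k) : ℕ → k[X]
  | 0 => C c
  | j + 1 => C ((j + 1 : ℕ) : k)⁻¹ * (F * derivative (stc F m c j)
      - C ((j + m : ℕ) : k) * derivative F * stc F m c j)

/-- auxiliary Stepanov polynomials -/
noncomputable def stA (F Z : k[X]) (m : ℕ) (c : k) : ℕ → k[X]
  | 0 => F ^ m - C c
  | j + 1 => F * stA F Z m c j - stc F m c (j + 1) * Z ^ (j + 1)

lemma stc_rec (F : k[X]) (m : ℕ) (c : k) (j : ℕ) (hj : ((j + 1 : ℕ) : k) ≠ 0) :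
    C ((j + 1 : ℕ) : k) * stc F m c (j + 1) =
      F * derivative (stc F m c j) - C ((j + m : ℕ) : k) * derivative F * stc F m c j := by
  rw [stc, ← mul_assoc, ← C_mul, mul_inv_cancel₀ hj, C_1, one_mul]

lemma stA_ode (F Z : k[X]) (hZ : derivative Z = -1) (m : ℕ) (c : k) : ∀ j : ℕ,
    (∀ i : ℕ, 1 ≤ i → i ≤ j + 1 → (i : k) ≠ 0) →
    F * derivative (stA F Z m c j) - C ((j + m : ℕ) : k) * derivative F * stA F Z m c j =
      - (C ((j + 1 : ℕ) : k) * stc F m c (j + 1) * Z ^ j) := by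
  intro j
  induction j with
  | zero =>
    intro hi
    rw [stc_rec F m c 0 (hi 1 le_rfl le_rfl)]
    simp only [stA, stc, derivative_sub, derivative_C, derivative_pow, pow_zero, zero_add]
    rcases m with _ | m
    · simp
    · simp only [Nat.add_sub_cancel]
      push_cast
      ring
  | succ j ih =>
    intro hi
    have ih' := ih (fun i h1 h2 => hi i h1 (by omega))
    rw [stc_rec F m c (j + 1) (hi (j + 2) (by omega) (by omega))]
    simp only [stA, derivative_sub, derivative_mul, derivative_pow, hZ, Nat.add_sub_cancel]
    push_cast at ih' ⊢
    simp only [map_add, map_natCast, map_one] at ih' ⊢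
    linear_combination F * ih'

lemma stc_deg (F : k[X]) (m : ℕ) (c : k) (hF : 0 < F.natDegree) : ∀ j : ℕ,
    (stc F m c j).natDegree ≤ j * (F.natDegree - 1) := by
  intro j
  induction j with
  | zero => simp [stc]
  | succ j ih =>
    rw [stc]
    refine (natDegree_C_mul_le _ _).trans ?_
    have hd : (derivative F).natDegree ≤ F.natDegree - 1 := natDegree_derivative_le F
    have h2 : (C ((j + m : ℕ) : k) * derivative F * stc F m c j).natDegree ≤
        (F.natDegree - 1) + j * (F.natDegree - 1) := by
      refine natDegree_mul_le.trans (add_le_add ((natDegree_C_mul_le _ _).trans hd) ih)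
    have h1 : (F * derivative (stc F m c j)).natDegree ≤ (F.natDegree - 1) + j * (F.natDegree - 1) := by
      by_cases h0 : (stc F m c j).natDegree = 0
      · rw [natDegree_eq_zero] at h0
        obtain ⟨a, ha⟩ := h0
        rw [← ha]; simp
      · refine natDegree_mul_le.trans ?_
        have := natDegree_derivative_le (stc F m c j)
        omega
    refine (natDegree_sub_le _ _).trans (max_le ?_ ?_) <;> rw [add_mul, one_mul] <;> omega

lemma stA_deg (F Z : k[X]) (m : ℕ) (c : k) (hF : 0 < F.natDegree) : ∀ j : ℕ,
    (stA F Z m c j).natDegree ≤ j * F.natDegree + max (m * F.natDegree) (j * Z.natDegree) := by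
  intro j
  induction j with
  | zero =>
    simp only [stA]
    refine (natDegree_sub_le _ _).trans ?_
    simp [natDegree_pow]
  | succ j ih =>
    simp only [stA]
    refine (natDegree_sub_le _ _).trans (max_le ?_ ?_)
    · refine natDegree_mul_le.trans ?_
      have : max (m * F.natDegree) (j * Z.natDegree) ≤ max (m * F.natDegree) ((j+1) * Z.natDegree) := by
        gcongr; omega
      rw [add_mul, one_mul]
      omega
    · refine natDegree_mul_le.trans (add_le_add ?_ ?_)
      · refine (stc_deg F m c hF (j + 1)).trans ?_
        gcongr; omega
      · rw [natDegree_pow]; exact le_max_right _ _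

lemma stA_dvd (F Z : k[X]) (hZ : derivative Z = -1) (m : ℕ) (c u : k) (hZu : Z.eval u = 0)
    (hu : (F.eval u) ^ m = c) : ∀ j : ℕ,
    (∀ i : ℕ, 1 ≤ i → i ≤ j + 1 → (i : k) ≠ 0) →
    (X - C u) ^ (j + 1) ∣ stA F Z m c j := by
  intro j
  obtain ⟨V, hV⟩ := dvd_iff_isRoot.mpr hZu
  have hVu : V.eval u = -1 := by
    have := congrArg (fun P => (derivative P).eval u) hV
    simp [hZ, derivative_mul] at this
    exact this.symm
  induction j with
  | zero =>
    intro _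
    rw [zero_add, pow_one, dvd_iff_isRoot]
    simp [stA, hu]
  | succ j ih =>
    intro hi
    obtain ⟨B, hB⟩ := ih (fun i h1 h2 => hi i h1 (by omega))
    have hode := stA_ode F Z hZ m c j (fun i h1 h2 => hi i h1 (by omega))
    have hj : ((j + 1 : ℕ) : k) ≠ 0 := hi (j + 1) (by omega) (by omega)
    have hne : (X - C u : k[X]) ^ j ≠ 0 := pow_ne_zero _ (X_sub_C_ne_zero u)
    have e1 : C ((j + 1 : ℕ) : k) * (F * B) + (X - C u) * (F * derivative B -
        C ((j + m : ℕ) : k) * derivative F * B) = - (C ((j + 1 : ℕ) : k) * stc F m c (j + 1) * V ^ j) := by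
      apply mul_left_cancel₀ hne
      rw [hB, hV] at hode
      simp only [derivative_mul, derivative_pow, derivative_sub, derivative_X, derivative_C,
        Nat.add_sub_cancel, mul_pow] at hode
      push_cast at hode ⊢
      simp only [map_add, map_natCast, map_one] at hode ⊢
      linear_combination hode
    have e2 := congrArg (fun P => P.eval u) e1
    simp only [eval_add, eval_mul, eval_C, eval_sub, eval_X, sub_self, zero_mul, add_zero, eval_neg,
      eval_pow, hVu] at e2
    have e3 : F.eval u * B.eval u = - ((stc F m c (j + 1)).eval u * (-1) ^ j) := by
      apply mul_left_cancel₀ hj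
      linear_combination e2
    have e4 : X - C u ∣ F * B - stc F m c (j + 1) * V ^ (j + 1) := by
      rw [dvd_iff_isRoot]
      simp only [IsRoot, eval_sub, eval_mul, eval_pow, hVu]
      rw [e3]; ring
    obtain ⟨E, hE⟩ := e4
    refine ⟨E, ?_⟩
    simp only [stA]
    rw [hB, hV, mul_pow]
    linear_combination (X - C u) ^ (j + 1) * hE

theorem stepanov {ℓ : ℕ} [Fact ℓ.Prime] (F : (ZMod ℓ)[X]) (hcop : IsCoprime F (derivative F))
    (hF : 0 < F.natDegree) (hℓ : F.natDegree ^ 2 + (F.natDegree + 1) ^ 2 < ℓ)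
    (m : ℕ) (hm1 : 1 ≤ m) (hm2 : 2 * m < ℓ) (c : ZMod ℓ) (hc : c ≠ 0)
    (h : ∀ u : ZMod ℓ, u ≠ 0 → F.eval u ≠ 0 → (F.eval u) ^ m = c) : False := by
  set d := F.natDegree with hd
  have hp : ℓ.Prime := Fact.out
  have hF0 : F ≠ 0 := by rintro rfl; simp [d] at hF
  have hcast : ∀ i : ℕ, 1 ≤ i → i < ℓ → (i : ZMod ℓ) ≠ 0 := by
    intro i h1 h2 h3
    rw [ZMod.natCast_eq_zero_iff] at h3
    exact absurd (Nat.le_of_dvd h1 h3) (by omega)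
  have hd1 : d + 1 < ℓ := by nlinarith
  have hd2 : 2 * d < ℓ := by nlinarith
  set Z : (ZMod ℓ)[X] := X ^ ℓ - X with hZdef
  have hZ : derivative Z = -1 := by simp [Z, derivative_X_pow]
  have hZdeg : Z.natDegree = ℓ := by
    rw [hZdef]; exact FiniteField.X_pow_card_sub_X_natDegree_eq _ hp.one_lt
  have hZu : ∀ u, Z.eval u = 0 := by intro u; simp [Z, ZMod.pow_card]
  -- the good points
  classical
  set S : Finset (ZMod ℓ) := Finset.univ.filter (fun u => u ≠ 0 ∧ F.eval u ≠ 0) with hS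
  have hcard : ℓ ≤ S.card + (1 + d) := by
    have h1 : (Finset.univ : Finset (ZMod ℓ)) ⊆ S ∪ ({0} ∪ F.roots.toFinset) := by
      intro u _
      by_cases h0 : u = 0
      · simp [h0]
      · by_cases h1 : F.eval u = 0
        · simp [h1, hF0]
        · simp [S, h0, h1]
    have h2 := Finset.card_le_card h1
    rw [Finset.card_univ, ZMod.card] at h2
    have h3 := Finset.card_union_le S ({0} ∪ F.roots.toFinset)
    have h4 := Finset.card_union_le ({0} : Finset (ZMod ℓ)) F.roots.toFinset
    have h5 := F.roots.toFinset_card_le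
    have h6 := F.card_roots'
    simp only [Finset.card_singleton] at h4
    omega
  have hA : stA F Z m c d = 0 := by
    by_contra hne
    have h1 : ∏ u ∈ S, (X - C u) ^ (d + 1) ∣ stA F Z m c d := by
      apply Finset.prod_dvd_of_coprime
      · intro a _ b _ hab
        exact (isCoprime_X_sub_C_of_isUnit_sub (sub_ne_zero.mpr hab).isUnit).pow
      · intro u hu
        simp only [S, Finset.mem_filter] at hu
        exact stA_dvd F Z hZ m c u (hZu u) (h u hu.2.1 hu.2.2) d
          (fun i h1 h2 => hcast i h1 (by omega))
    have h2 := natDegree_le_of_dvd h1 hne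
    rw [natDegree_prod _ _ (fun u _ => pow_ne_zero _ (X_sub_C_ne_zero u))] at h2
    simp only [natDegree_pow, natDegree_X_sub_C, mul_one, Finset.sum_const, smul_eq_mul] at h2
    have h3 := stA_deg F Z m c hF d
    rw [hZdeg, ← hd] at h3
    have h4 : max (m * d) (d * ℓ) = d * ℓ := max_eq_right (by nlinarith)
    rw [h4] at h3
    have h5 : ℓ * (d + 1) ≤ (S.card + (1 + d)) * (d + 1) := Nat.mul_le_mul_right _ hcard
    nlinarith
  have hall : ∀ j : ℕ, j ≤ d + 1 → stc F m c (d + 1 - j) = 0 := by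
    intro j
    induction j with
    | zero =>
      intro _
      have := stA_ode F Z hZ m c d (fun i h1 h2 => hcast i h1 (by omega))
      rw [hA] at this
      have hZ0 : Z ≠ 0 := by rintro h0; rw [h0] at hZdeg; simp at hZdeg; exact hp.ne_zero hZdeg.symm
      simp only [derivative_zero, mul_zero, sub_zero, zero_eq_neg, mul_eq_zero, C_eq_zero] at this
      rcases this with (h1 | h1) | h1
      · exact absurd h1 (hcast _ (by omega) (by omega))
      · exact h1
      · exact absurd h1 (pow_ne_zero _ hZ0)
    | succ j ih =>
      intro hj
      have ih' := ih (by omega)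
      obtain ⟨i, hi⟩ : ∃ i, d + 1 - (j + 1) = i := ⟨_, rfl⟩
      have hi' : d + 1 - j = i + 1 := by omega
      rw [hi' ] at ih'
      rw [hi]
      have hrec := stc_rec F m c i (hcast (i + 1) (by omega) (by omega))
      rw [ih', mul_zero] at hrec
      refine ode_zero hcop (i + m) _ (fun t h1 h2 => hcast t h1 (by omega)) (sub_eq_zero.mp hrec.symm) ?_
      refine degree_le_natDegree.trans_lt ?_
      rw [Nat.cast_lt]
      refine (stc_deg F m c hF i).trans_lt ?_
      rw [← hd]
      calc i * (d - 1) ≤ i * d := by gcongr; omega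
        _ < (i + m) * d := by apply Nat.mul_lt_mul_of_pos_right <;> omega
  have := hall (d + 1) le_rfl
  rw [Nat.sub_self] at this
  simp [stc] at this
  exact hc this
end

end

section
open Polynomial

/-- `F(u) = s` with both units. -/
def Adm (F : ℤ[X]) (R : Type*) [CommRing R] (u s : Rˣ) : Prop := aeval (u : R) F = (s : R)

def PP (F : ℤ[X]) (R : Type*) [CommRing R] : Prop :=
  (∃ u s : Rˣ, Adm F R u s) ∧
  ∀ χ : Rˣ →* ℂˣ, (∀ u s v t : Rˣ, Adm F R u s → Adm F R v t → χ s = χ t) → χ = 1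

lemma aeval_ringHom {R S : Type*} [CommRing R] [CommRing S] (F : ℤ[X]) (φ : R →+* S) (x : R) :
    aeval (φ x) F = φ (aeval x F) := by
  rw [← RingHom.toIntAlgHom_apply φ, aeval_algHom_apply]; rfl

lemma PP_prod {F : ℤ[X]} {T R S : Type*} [CommRing T] [CommRing R] [CommRing S] (e : T ≃+* R × S)
    (hR : PP F R) (hS : PP F S) : PP F T := by
  -- the unit of `T` from components
  let mk : Rˣ × Sˣ →* Tˣ := (Units.map (e.symm : R × S →* T)).comp
    (MulEquiv.prodUnits (M := R) (N := S)).symm.toMonoidHom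
  have hmk : ∀ a b, ((mk (a, b) : Tˣ) : T) = e.symm ((a : R), (b : S)) := by intro a b; rfl
  have hAdm : ∀ u s u' s', Adm F R u s → Adm F S u' s' → Adm F T (mk (u, u')) (mk (s, s')) := by
    intro u s u' s' h1 h2
    unfold Adm at *
    rw [hmk, hmk]
    letI : Algebra ℤ (R × S) := Ring.toIntAlgebra _
    have h3 := aeval_ringHom F (e.symm : R × S →+* T) ((u : R), (u' : S))
    have h4 : aeval ((u : R), (u' : S)) F = ((s : R), (s' : S)) := by
      apply Prod.ext
      · have := aeval_ringHom F (RingHom.fst R S) ((u : R), (u' : S))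
        simp only [RingHom.coe_fst] at this
        rw [← this]; exact h1
      · have := aeval_ringHom F (RingHom.snd R S) ((u : R), (u' : S))
        simp only [RingHom.coe_snd] at this
        rw [← this]; exact h2
    rw [h4] at h3
    exact h3
  obtain ⟨⟨u0, s0, h0⟩, hR⟩ := hR
  obtain ⟨⟨v0, t0, g0⟩, hS⟩ := hS
  refine ⟨⟨_, _, hAdm _ _ _ _ h0 g0⟩, fun χ hχ => ?_⟩
  have c1 := hR ((χ.comp mk).comp (MonoidHom.inl _ _)) (by
    intro u s v t h1 h2
    have h3 := hχ _ _ _ _ (hAdm _ _ _ _ h1 g0) (hAdm _ _ _ _ h2 g0)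
    have e1 : ∀ s : Rˣ, (s, t0) = (s, 1) * ((1, t0) : Rˣ × Sˣ) := by intro s; simp
    rw [e1 s, e1 t, map_mul, map_mul, map_mul, map_mul] at h3
    exact mul_right_cancel h3)
  have c2 := hS ((χ.comp mk).comp (MonoidHom.inr _ _)) (by
    intro u s v t h1 h2
    have h3 := hχ _ _ _ _ (hAdm _ _ _ _ h0 h1) (hAdm _ _ _ _ h0 h2)
    have e1 : ∀ s : Sˣ, (s0, s) = (1, s) * ((s0, 1) : Rˣ × Sˣ) := by intro s; simp
    rw [e1 s, e1 t, map_mul, map_mul, map_mul, map_mul] at h3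
    exact mul_right_cancel h3)
  ext w
  have hw : ∃ a b, w = mk (a, b) := by
    refine ⟨Units.map ((RingHom.fst R S).comp (e : T →+* R × S) : T →* R) w,
      Units.map ((RingHom.snd R S).comp (e : T →+* R × S) : T →* S) w, ?_⟩
    ext
    rw [hmk]
    symm
    rw [RingEquiv.symm_apply_eq]
    rfl
  obtain ⟨a, b, rfl⟩ := hw
  have e1 : (a, b) = (a, 1) * ((1, b) : Rˣ × Sˣ) := by simp
  have d1 : χ (mk (a, 1)) = 1 := DFunLike.congr_fun c1 a
  have d2 : χ (mk (1, b)) = 1 := DFunLike.congr_fun c2 b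
  rw [e1, map_mul, map_mul, d1, d2]
  simp

lemma PP_field {ℓ : ℕ} [Fact ℓ.Prime] (F : ℤ[X])
    (hcop : IsCoprime (F.map (Int.castRingHom (ZMod ℓ))) (derivative (F.map (Int.castRingHom (ZMod ℓ)))))
    (hdeg : (F.map (Int.castRingHom (ZMod ℓ))).natDegree = F.natDegree)
    (hF : 0 < F.natDegree) (hℓ : F.natDegree ^ 2 + (F.natDegree + 1) ^ 2 < ℓ)
    (hne : ∃ u s : (ZMod ℓ)ˣ, Adm F (ZMod ℓ) u s) : PP F (ZMod ℓ) := by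
  refine ⟨hne, fun χ hχ => ?_⟩
  by_contra hχ1
  have hp : ℓ.Prime := Fact.out
  obtain ⟨u0, s0, h0⟩ := hne
  obtain ⟨γ, hγ⟩ := IsCyclic.exists_generator (α := (ZMod ℓ)ˣ)
  have hγo : orderOf γ = ℓ - 1 := by
    rw [orderOf_eq_card_of_forall_mem_zpowers hγ, Nat.card_eq_fintype_card, ZMod.card_units]
  have hζ : χ γ ≠ 1 := by
    intro h1
    apply hχ1
    ext w
    obtain ⟨i, rfl⟩ := hγ w
    simp [h1]
  set n := orderOf (χ γ) with hn
  have hnd : n ∣ ℓ - 1 := by rw [← hγo]; exact orderOf_map_dvd χ γ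
  obtain ⟨m, hm⟩ := hnd
  have hl2 := hp.two_le
  have hm1 : 1 ≤ m := by
    rcases Nat.eq_zero_or_pos m with h | h
    · rw [h] at hm; omega
    · exact h
  have hn1 : n ≠ 1 := by rw [hn, Ne, orderOf_eq_one_iff]; exact hζ
  have hn0 : n ≠ 0 := by intro h; rw [h] at hm; omega
  have hn2 : 2 ≤ n := by omega
  have hm2 : 2 * m < ℓ := by
    have : 2 * m ≤ n * m := Nat.mul_le_mul_right _ hn2
    omega
  have key : ∀ s t : (ZMod ℓ)ˣ, χ s = χ t → s ^ m = t ^ m := by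
    intro s t hst
    obtain ⟨i, rfl⟩ := hγ s
    obtain ⟨j, rfl⟩ := hγ t
    simp only [map_zpow] at hst
    rw [← orderOf_dvd_sub_iff_zpow_eq_zpow, ← hn] at hst
    simp only [← zpow_natCast, ← zpow_mul]
    rw [← orderOf_dvd_sub_iff_zpow_eq_zpow, hγo, hm]
    obtain ⟨r, hr⟩ := hst
    refine ⟨r, ?_⟩
    push_cast
    linear_combination (m : ℤ) * hr
  have heval : ∀ u : ZMod ℓ, (F.map (Int.castRingHom (ZMod ℓ))).eval u = aeval u F := by
    intro u; rw [eval_map, aeval_def]; rfl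
  refine stepanov (F.map (Int.castRingHom (ZMod ℓ))) hcop (by rwa [hdeg]) (by rwa [hdeg]) m hm1 hm2
    ((s0 : ZMod ℓ) ^ m) (pow_ne_zero _ s0.ne_zero) ?_
  intro u hu hFu
  rw [heval] at hFu ⊢
  have := key _ _ (hχ (Units.mk0 u hu) (Units.mk0 _ hFu) u0 s0 rfl h0)
  have h2 := congrArg Units.val this
  simpa using h2

lemma PP_primePow {ℓ e : ℕ} [Fact ℓ.Prime] (he : 0 < e) (F : ℤ[X]) (hP : PP F (ZMod ℓ))
    (hu : ∃ u : ZMod ℓ, u ≠ 0 ∧ aeval u F ≠ 0 ∧ aeval u (derivative F) ≠ 0) :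
    PP F (ZMod (ℓ ^ e)) := by
  have hp : ℓ.Prime := Fact.out
  have : NeZero (ℓ ^ e) := ⟨pow_ne_zero _ hp.ne_zero⟩
  have hdvd : ℓ ∣ ℓ ^ e := dvd_pow_self ℓ he.ne'
  set R := ZMod (ℓ ^ e) with hR
  let π : R →+* ZMod ℓ := ZMod.castHom hdvd (ZMod ℓ)
  have hπ : Function.Surjective π := ZMod.castHom_surjective hdvd
  -- kernel is nilpotent
  have hker : ∀ x : R, π x = 0 → IsNilpotent x := by
    intro x hx
    refine ⟨e, ?_⟩
    obtain ⟨n, rfl⟩ := ZMod.natCast_zmod_surjective x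
    rw [map_natCast, ZMod.natCast_eq_zero_iff] at hx
    rw [← Nat.cast_pow, ZMod.natCast_eq_zero_iff]
    exact pow_dvd_pow_of_dvd hx e
  have hunit : ∀ x : R, π x ≠ 0 → IsUnit x := by
    intro x hx
    obtain ⟨y, hy⟩ := hπ (π x)⁻¹
    have h1 : π (x * y - 1) = 0 := by
      rw [map_sub, map_mul, hy, mul_inv_cancel₀ hx, map_one, sub_self]
    have h2 := (hker _ h1).isUnit_add_one
    rw [sub_add_cancel] at h2
    exact isUnit_of_mul_isUnit_left h2
  obtain ⟨a, ha0, haF, haF'⟩ := hu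
  obtain ⟨ũ, hũ⟩ := hπ a
  have hmap : ∀ (G : ℤ[X]) (x : R), π (aeval x G) = aeval (π x) G := fun G x => (aeval_ringHom G π x).symm
  have hu1 : IsUnit ũ := hunit _ (by rw [hũ]; exact ha0)
  have hFu1 : IsUnit (aeval ũ F) := hunit _ (by rw [hmap, hũ]; exact haF)
  refine ⟨⟨hu1.unit, hFu1.unit, rfl⟩, fun χ hχ => ?_⟩
  -- Hensel by counting
  let Fib := {x : R // π x = a}
  let Ψ : Fib → Fib := fun x => ⟨aeval x.1 F - aeval ũ F + ũ, by
    rw [map_add, map_sub, hmap, hmap, x.2, hũ, sub_self, zero_add]⟩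
  have hinj : Function.Injective Ψ := by
    rintro ⟨x, hx⟩ ⟨y, hy⟩ hxy
    have h1 : aeval x F = aeval y F := by
      have := congrArg Subtype.val hxy
      simpa [Ψ] using this
    obtain ⟨k, hk⟩ := binomExpansion (F.map (Int.castRingHom R)) y (x - y)
    have heval : ∀ (G : ℤ[X]) (u : R), (G.map (Int.castRingHom R)).eval u = aeval u G := by
      intro G u; rw [eval_map, aeval_def]; rfl
    rw [add_sub_cancel, derivative_map, heval, heval, heval, h1] at hk
    have h2 : (aeval y (derivative F) + k * (x - y)) * (x - y) = 0 := by
      linear_combination -hk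
    have h3 : IsUnit (aeval y (derivative F) + k * (x - y)) := by
      apply hunit
      rw [map_add, map_mul, map_sub, hx, hy, sub_self, mul_zero, add_zero, hmap, hy]
      exact haF'
    rw [h3.mul_right_eq_zero, sub_eq_zero] at h2
    exact Subtype.ext h2
  have hsurj := Finite.surjective_of_injective hinj
  have htriv : ∀ z : Rˣ, π z = 1 → χ z = 1 := by
    intro z hz
    have hw : π (aeval ũ F * z - aeval ũ F + ũ) = a := by
      rw [map_add, map_sub, map_mul, hz, mul_one, sub_self, zero_add, hũ]
    obtain ⟨⟨x, hx⟩, hxe⟩ := hsurj ⟨_, hw⟩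
    have h1 : aeval x F = aeval ũ F * z := by
      have := congrArg Subtype.val hxe
      simpa [Ψ] using this
    have hxu : IsUnit x := hunit _ (by rw [hx]; exact ha0)
    have h2 := hχ hxu.unit (hFu1.unit * z) hu1.unit hFu1.unit (by
      unfold Adm; simp [h1]) rfl
    rw [map_mul] at h2
    exact mul_eq_left.mp h2
  -- descend
  have hsu : Function.Surjective (ZMod.unitsMap hdvd) := ZMod.unitsMap_surjective hdvd
  have hval : ∀ z : Rˣ, ((ZMod.unitsMap hdvd z : (ZMod ℓ)ˣ) : ZMod ℓ) = π z := by
    intro z; rfl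
  have hkk : (ZMod.unitsMap hdvd).ker ≤ χ.ker := by
    intro z hz
    rw [MonoidHom.mem_ker] at hz ⊢
    apply htriv
    rw [← hval, hz]; rfl
  let χ' : (ZMod ℓ)ˣ →* ℂˣ := MonoidHom.liftOfSurjective _ hsu ⟨χ, hkk⟩
  have hχ' : ∀ z, χ' (ZMod.unitsMap hdvd z) = χ z := by
    intro z
    exact MonoidHom.liftOfRightInverse_comp_apply _ _ _ ⟨χ, hkk⟩ z
  have hAd : ∀ u s, Adm F (ZMod ℓ) u s → ∃ u' s', Adm F R u' s' ∧ ZMod.unitsMap hdvd s' = s := by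
    intro u s hus
    obtain ⟨u', rfl⟩ := hsu u
    have h1 : π (aeval (u' : R) F) = s := by rw [hmap, ← hval]; exact hus
    have h2 : IsUnit (aeval (u' : R) F) := hunit _ (by rw [h1]; exact s.ne_zero)
    refine ⟨u', h2.unit, rfl, ?_⟩
    ext
    rw [hval]; exact h1
  have hχ'1 := hP.2 χ' (by
    intro u s v t h1 h2
    obtain ⟨u', s', h1', rfl⟩ := hAd u s h1
    obtain ⟨v', t', h2', rfl⟩ := hAd v t h2
    rw [hχ', hχ']
    exact hχ _ _ _ _ h1' h2')
  ext z
  rw [← hχ', hχ'1]; rfl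

lemma clear_denoms (p : ℚ[X]) : ∃ (b : ℤ) (P : ℤ[X]), b ≠ 0 ∧ P.map (Int.castRingHom ℚ) = C (b : ℚ) * p := by
  obtain ⟨b, hb, h⟩ := IsLocalization.integerNormalization_spec (nonZeroDivisors ℤ) (S := ℚ) p
  refine ⟨b, _, nonZeroDivisors.ne_zero hb, h.trans ?_⟩
  rw [← smul_eq_C_mul]
  exact (Int.cast_smul_eq_zsmul ℚ b p).symm

lemma int_bezout (F : ℤ[X]) (hFsep : Squarefree (F.map (Int.castRingHom ℚ))) :
    ∃ (A B : ℤ[X]) (r : ℤ), r ≠ 0 ∧ A * F + B * derivative F = C r := by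
  have hs : (F.map (Int.castRingHom ℚ)).Separable := PerfectField.separable_iff_squarefree.mpr hFsep
  obtain ⟨a, b, hab⟩ := hs
  obtain ⟨m, A, hm, hA⟩ := clear_denoms a
  obtain ⟨n, B, hn, hB⟩ := clear_denoms b
  refine ⟨C n * A, C m * B, m * n, mul_ne_zero hm hn, ?_⟩
  apply map_injective (Int.castRingHom ℚ) Int.cast_injective
  rw [derivative_map] at hab
  simp only [Polynomial.map_add, Polynomial.map_mul, map_C, hA, hB, Int.coe_castRingHom, Int.cast_mul, C_mul]
  linear_combination (C (m : ℚ) * C (n : ℚ)) * hab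

theorem PP_main (F : ℤ[X]) (hFdeg : 0 < F.natDegree)
    (hFsep : Squarefree (F.map (Int.castRingHom ℚ))) :
    ∃ K : ℕ, ∀ q : ℕ, 0 < q → (∀ p : ℕ, p.Prime → p ∣ q → K < p) → PP F (ZMod q) := by
  obtain ⟨A, B, r, hr, hAB⟩ := int_bezout F hFsep
  set d := F.natDegree with hd
  have hlc : F.leadingCoeff ≠ 0 := by
    rw [Ne, leadingCoeff_eq_zero]; rintro rfl; simp [d] at hFdeg
  refine ⟨r.natAbs + F.leadingCoeff.natAbs + d ^ 2 + (d + 1) ^ 2, fun q => ?_⟩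
  induction q using Nat.recOnPosPrimePosCoprime with
  | zero => intro h; exact absurd h (lt_irrefl _)
  | one =>
    intro _ _
    refine ⟨⟨1, 1, Subsingleton.elim _ _⟩, fun χ _ => ?_⟩
    ext z
    rw [Subsingleton.elim z 1]; simp
  | coprime a b ha hb hab iha ihb =>
    intro _ hq
    exact PP_prod (ZMod.chineseRemainder hab)
      (iha (by omega) (fun p hp hpa => hq p hp (hpa.mul_right b)))
      (ihb (by omega) (fun p hp hpa => hq p hp (hpa.mul_left a)))
  | prime_pow ℓ e hp he =>
    intro _ hq
    have : Fact ℓ.Prime := ⟨hp⟩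
    have hK := hq ℓ hp (dvd_pow_self ℓ he.ne')
    have hintg : ∀ z : ℤ, z ≠ 0 → z.natAbs < ℓ → (z : ZMod ℓ) ≠ 0 := by
      intro z hz hz2 h0
      rw [ZMod.intCast_zmod_eq_zero_iff_dvd, Int.natCast_dvd] at h0
      exact absurd (Nat.le_of_dvd (Int.natAbs_pos.mpr hz) h0) (by omega)
    set f := F.map (Int.castRingHom (ZMod ℓ)) with hf
    have hdeg : f.natDegree = d := by
      apply natDegree_map_of_leadingCoeff_ne_zero
      exact hintg _ hlc (by omega)
    have hcop : IsCoprime f (derivative f) := by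
      have h1 := congrArg (Polynomial.map (Int.castRingHom (ZMod ℓ))) hAB
      simp only [Polynomial.map_add, Polynomial.map_mul, map_C, Int.coe_castRingHom, ← derivative_map, ← hf] at h1
      have hr0 := hintg r hr (by omega)
      refine ⟨C (r : ZMod ℓ)⁻¹ * A.map (Int.castRingHom (ZMod ℓ)),
        C (r : ZMod ℓ)⁻¹ * B.map (Int.castRingHom (ZMod ℓ)), ?_⟩
      have h2 : (C (r : ZMod ℓ)⁻¹ : (ZMod ℓ)[X]) * C (r : ZMod ℓ) = 1 := by
        rw [← C_mul, inv_mul_cancel₀ hr0, C_1]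
      linear_combination C (r : ZMod ℓ)⁻¹ * h1 + h2
    have hf0 : f ≠ 0 := by intro h; rw [h] at hdeg; simp at hdeg; omega
    have hf'0 : derivative f ≠ 0 := by
      intro h
      rw [h, isCoprime_zero_right] at hcop
      have := natDegree_eq_zero_of_isUnit hcop
      omega
    have hex : ∃ u : ZMod ℓ, u ≠ 0 ∧ aeval u F ≠ 0 ∧ aeval u (derivative F) ≠ 0 := by
      have heval : ∀ (G : ℤ[X]) (u : ZMod ℓ), (G.map (Int.castRingHom (ZMod ℓ))).eval u = aeval u G := by
        intro G u; rw [eval_map, aeval_def]; rfl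
      by_contra hcon
      push Not at hcon
      have hne : X * f * derivative f ≠ 0 := mul_ne_zero (mul_ne_zero X_ne_zero hf0) hf'0
      refine hne (eq_zero_of_natDegree_lt_card_of_eval_eq_zero' (X * f * derivative f) Finset.univ ?_ ?_)
      · intro u _
        simp only [eval_mul, eval_X, hf, derivative_map, heval]
        by_cases h1 : u = 0
        · simp [h1]
        · by_cases h2 : aeval u F = 0
          · simp [h2]
          · simp [hcon u h1 h2]
      · rw [Finset.card_univ, ZMod.card]
        have h1 := natDegree_mul_le (p := X * f) (q := derivative f)
        have h2 := natDegree_mul_le (p := X) (q := f)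
        have h3 := natDegree_derivative_le f
        rw [natDegree_X] at h2
        have h4 : 2 * d ≤ (d + 1) ^ 2 := by nlinarith
        omega
    refine PP_primePow he F (PP_field F hcop hdeg hFdeg (by rw [← hd]; omega) ?_) hex
    obtain ⟨u, h1, h2, _⟩ := hex
    exact ⟨Units.mk0 u h1, Units.mk0 _ h2, rfl⟩

end

section
open Filter Topology Finset Polynomial
open ArithmeticFunction (vonMangoldt)

lemma norm_sum_lt_card {ι : Type*} (s : Finset ι) (z : ι → ℂ) (hz : ∀ i ∈ s, ‖z i‖ = 1)
    {a b : ι} (ha : a ∈ s) (hb : b ∈ s) (hab : z a ≠ z b) : ‖∑ i ∈ s, z i‖ < s.card := by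
  classical
  have hne : a ≠ b := by rintro rfl; exact hab rfl
  have hb' : b ∈ s.erase a := Finset.mem_erase.mpr ⟨hne.symm, hb⟩
  have h1 : ‖z a + z b‖ < 2 := by
    have h2 : ¬ SameRay ℝ (z a) (z b) := by
      rw [sameRay_iff_of_norm_eq ((hz a ha).trans (hz b hb).symm)]
      exact hab
    have := norm_add_lt_of_not_sameRay h2
    rw [hz a ha, hz b hb] at this
    linarith
  rw [← Finset.add_sum_erase s z ha, ← Finset.add_sum_erase _ z hb', ← add_assoc]
  have h3 : ‖∑ x ∈ (s.erase a).erase b, z x‖ ≤ ((s.erase a).erase b).card := by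
    refine (norm_sum_le _ _).trans ?_
    rw [Finset.sum_congr rfl (fun i hi => hz i (Finset.mem_of_mem_erase (Finset.mem_of_mem_erase hi)))]
    simp
  have h4 : ((s.erase a).erase b).card + 2 = s.card := by
    have e1 := Finset.card_erase_add_one hb'
    have e2 := Finset.card_erase_add_one ha
    omega
  have h5 : (((s.erase a).erase b).card : ℝ) + 2 = s.card := by exact_mod_cast h4
  have := norm_add_le (z a + z b) (∑ x ∈ (s.erase a).erase b, z x)
  linarith

lemma isUnit_iff_gcd (q : ℕ) (a : ℤ) : IsUnit (a : ZMod q) ↔ Int.gcd a q = 1 := by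
  rw [ZMod.coe_int_isUnit_iff_isCoprime, isCoprime_comm, Int.isCoprime_iff_gcd_eq_one]

lemma cnt_eq (x : ℝ) (hx : 0 ≤ x) (P : ℕ → Prop) [DecidablePred P] :
    cnt x P = ((Icc 1 ⌊x⌋₊).filter P).card := by
  unfold cnt
  rw [← Set.ncard_coe_finset]
  congr 1
  ext n
  simp only [Set.mem_setOf_eq, coe_filter, mem_Icc, Nat.le_floor_iff hx, and_assoc]
  rfl

lemma main_q (f : ℕ → ℤ) (F : Polynomial ℤ)
    (hf1 : f 1 = 1)
    (hfm : ∀ m n : ℕ, Nat.Coprime m n → f (m * n) = f m * f n)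
    (hfp : ∀ p : ℕ, p.Prime → f p = F.eval (p : ℤ))
    (q : ℕ) (hq : 0 < q) (hPP : PP F (ZMod q)) :
    {n : ℕ | Int.gcd (f n) (q : ℤ) = 1}.Infinite ∧
      ∀ a : ℤ, Int.gcd a (q : ℤ) = 1 →
        Filter.Tendsto
          (fun x : ℝ => (cnt x (fun n => f n ≡ a [ZMOD (q : ℤ)]) : ℝ)
              / (cnt x (fun n => Int.gcd (f n) (q : ℤ) = 1) : ℝ))
          Filter.atTop (nhds (1 / (Nat.totient q : ℝ))) := by
  classical
  have : NeZero q := ⟨hq.ne'⟩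
  set g : ℕ → ℝ := fun n => if Int.gcd (f n) (q : ℤ) = 1 then 1 else 0 with hg
  have hφ : (0 : ℝ) < q.totient := by exact_mod_cast Nat.totient_pos.mpr hq
  have hdom : ∀ χ : DirichletCharacter ℂ q,
      Dom q (fun n => χ (f n : ZMod q)) (fun u => χ (aeval u F)) g := by
    intro χ
    refine ⟨fun m n hmn => ?_, fun p hp => ?_, fun n => ?_, fun n => ?_, ?_, fun u => χ.norm_le_one _⟩
    · simp only [hfm m n hmn]; push_cast; rw [map_mul]
    · simp only [hfp p hp]
      congr 1
      have h1 := aeval_ringHom F (Int.castRingHom (ZMod q)) (p : ℤ)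
      rw [coe_aeval_eq_eval] at h1
      simp only [Int.coe_castRingHom, Int.cast_natCast] at h1
      exact h1.symm
    · simp only [hg]
      split_ifs with h1
      · exact χ.norm_le_one _
      · rw [← isUnit_iff_gcd] at h1
        rw [χ.map_nonunit h1, norm_zero]
    · simp only [hg]; split_ifs <;> norm_num
    · simp [hg, hf1]
  have hg1 : (fun n => (1 : DirichletCharacter ℂ q) (f n : ZMod q)) = fun n => (g n : ℂ) := by
    funext n
    simp only [hg]
    split_ifs with h1
    · rw [← isUnit_iff_gcd] at h1
      rw [MulChar.one_apply h1]; simp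
    · rw [← isUnit_iff_gcd] at h1
      rw [MulChar.map_nonunit _ h1]; simp
  have Dg := hdom 1
  rw [hg1] at Dg
  set S : Finset (ZMod q)ˣ := Finset.univ.filter (fun u => IsUnit (aeval (u : ZMod q) F)) with hS
  have hsumS : ∀ χ : DirichletCharacter ℂ q, ∑ u : (ZMod q)ˣ, χ (aeval (u : ZMod q) F) =
      ∑ u ∈ S, χ (aeval (u : ZMod q) F) := by
    intro χ
    symm
    apply Finset.sum_subset (Finset.subset_univ _)
    intro u _ hu
    apply χ.map_nonunit
    simpa [S] using hu
  set α : ℝ := (q.totient : ℝ)⁻¹ * S.card with hα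
  have hα0 : 0 < α := by
    obtain ⟨u, s, hus⟩ := hPP.1
    have : u ∈ S := by
      simp only [S, Finset.mem_filter, Finset.mem_univ, true_and]
      unfold Adm at hus
      rw [hus]; exact s.isUnit
    have : 0 < S.card := Finset.card_pos.mpr ⟨u, this⟩
    positivity
  have hαlim := pnt_weighted (fun u : ZMod q => (1 : DirichletCharacter ℂ q) (aeval u F))
  have hαe : ((q.totient : ℂ)⁻¹ * ∑ u : (ZMod q)ˣ, (1 : DirichletCharacter ℂ q) (aeval (u : ZMod q) F)) = (α : ℂ) := by
    rw [hsumS, Finset.sum_congr rfl (g := fun _ => (1 : ℂ))]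
    · simp [α]
    · intro u hu
      simp only [S, Finset.mem_filter] at hu
      exact MulChar.one_apply hu.2
  rw [hαe] at hαlim
  have hsmall : ∀ χ : DirichletCharacter ℂ q, χ ≠ 1 → ∀ η : ℝ, 0 < η → ∀ᶠ x : ℕ in atTop,
      ‖∑ n ∈ Icc 1 x, χ (f n : ZMod q)‖ ≤ η * ∑ n ∈ Icc 1 x, g n := by
    intro χ hχ η hη
    refine (hdom χ).little_o Dg hα0 hαlim (pnt_weighted (fun u : ZMod q => χ (aeval u F))) ?_ η hη
    rw [hsumS, norm_mul, norm_inv, Complex.norm_natCast, hα]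
    apply mul_lt_mul_of_pos_left _ (by positivity)
    obtain ⟨u, v, hu, hv, huv⟩ : ∃ u v, u ∈ S ∧ v ∈ S ∧
        χ (aeval (u : ZMod q) F) ≠ χ (aeval (v : ZMod q) F) := by
      by_contra hcon
      push Not at hcon
      apply hχ
      have h1 := hPP.2 χ.toUnitHom (by
        intro u s v t h1 h2
        unfold Adm at h1 h2
        have := hcon u v (by simp only [S, Finset.mem_filter, Finset.mem_univ, true_and]; rw [h1]; exact s.isUnit)
          (by simp only [S, Finset.mem_filter, Finset.mem_univ, true_and]; rw [h2]; exact t.isUnit)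
        rw [h1, h2] at this
        ext
        rw [MulChar.coe_toUnitHom, MulChar.coe_toUnitHom]
        exact this)
      ext w
      have h2 := congrArg Units.val (DFunLike.congr_fun h1 w)
      rw [MulChar.coe_toUnitHom] at h2
      rw [h2]; simp
    refine norm_sum_lt_card S _ (fun u hu => ?_) hu hv huv
    simp only [S, Finset.mem_filter] at hu
    obtain ⟨w, hw⟩ := hu.2
    rw [← hw]
    exact χ.unit_norm_eq_one w
  have hN := Dg.N_tendsto hα0 hαlim
  have hNcard : ∀ x : ℕ, ∑ n ∈ Icc 1 x, g n =
      (((Icc 1 x).filter (fun n => Int.gcd (f n) (q : ℤ) = 1)).card : ℝ) := by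
    intro x; simp [hg]
  constructor
  · intro hfin
    obtain ⟨x, hx⟩ := (hN.eventually_gt_atTop (hfin.toFinset.card : ℝ)).exists
    rw [hNcard, Nat.cast_lt] at hx
    refine absurd (Finset.card_le_card ?_) (not_le.mpr hx)
    intro n hn
    simpa using (Finset.mem_filter.mp hn).2
  · intro a ha
    have hau : IsUnit (a : ZMod q) := (isUnit_iff_gcd q a).mpr ha
    have key : ∀ x : ℕ, (q.totient : ℂ) * (((Icc 1 x).filter (fun n => f n ≡ a [ZMOD (q : ℤ)])).card : ℂ)
        = ∑ χ : DirichletCharacter ℂ q, χ (a : ZMod q)⁻¹ * ∑ n ∈ Icc 1 x, χ (f n : ZMod q) := by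
      intro x
      simp_rw [Finset.mul_sum]
      rw [Finset.sum_comm]
      rw [Finset.sum_congr rfl (fun n _ => DirichletCharacter.sum_char_inv_mul_char_eq ℂ hau (f n : ZMod q)),
        ← Finset.sum_filter, Finset.sum_const, nsmul_eq_mul, mul_comm]
      congr 3
      ext n
      simp only [Finset.mem_filter, and_congr_right_iff]
      intro _
      rw [← ZMod.intCast_eq_intCast_iff]
      exact eq_comm
    have hev : ∀ η : ℝ, 0 < η → ∀ᶠ x : ℕ in atTop,
        |(q.totient : ℝ) * (((Icc 1 x).filter (fun n => f n ≡ a [ZMOD (q : ℤ)])).card : ℝ)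
          - ∑ n ∈ Icc 1 x, g n| ≤ η * ∑ n ∈ Icc 1 x, g n := by
      intro η hη
      set K : ℝ := ((Finset.univ.erase (1 : DirichletCharacter ℂ q)).card : ℝ) with hK
      have h1 : ∀ᶠ x : ℕ in atTop, ∀ χ ∈ Finset.univ.erase (1 : DirichletCharacter ℂ q),
          ‖∑ n ∈ Icc 1 x, χ (f n : ZMod q)‖ ≤ (η / (K + 1)) * ∑ n ∈ Icc 1 x, g n := by
        rw [Filter.eventually_all_finset]
        intro χ hχ
        exact hsmall χ (Finset.ne_of_mem_erase hχ) _ (by positivity)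
      filter_upwards [h1] with x hx
      have h2 := key x
      rw [← Finset.add_sum_erase _ _ (Finset.mem_univ (1 : DirichletCharacter ℂ q))] at h2
      have hau' : IsUnit (a : ZMod q)⁻¹ := by
        obtain ⟨w, hw⟩ := hau
        rw [← hw, ZMod.inv_coe_unit]; exact w⁻¹.isUnit
      rw [MulChar.one_apply hau', one_mul] at h2
      have h3 : ∑ n ∈ Icc 1 x, (1 : DirichletCharacter ℂ q) (f n : ZMod q) = ((∑ n ∈ Icc 1 x, g n : ℝ) : ℂ) := by
        push_cast
        exact Finset.sum_congr rfl fun n _ => congrFun hg1 n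
      rw [h3] at h2
      have hN0 : 0 ≤ ∑ n ∈ Icc 1 x, g n := Finset.sum_nonneg fun n _ => Dg.g_nonneg n
      have h4 : |(q.totient : ℝ) * (((Icc 1 x).filter (fun n => f n ≡ a [ZMOD (q : ℤ)])).card : ℝ)
          - ∑ n ∈ Icc 1 x, g n| = ‖∑ χ ∈ Finset.univ.erase (1 : DirichletCharacter ℂ q),
            χ (a : ZMod q)⁻¹ * ∑ n ∈ Icc 1 x, χ (f n : ZMod q)‖ := by
        rw [← Real.norm_eq_abs, ← Complex.norm_real]
        congr 1
        push_cast at h2 ⊢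
        linear_combination h2
      rw [h4]
      calc _ ≤ ∑ χ ∈ Finset.univ.erase (1 : DirichletCharacter ℂ q), (η / (K + 1)) * ∑ n ∈ Icc 1 x, g n := by
            refine (norm_sum_le _ _).trans (Finset.sum_le_sum fun χ hχ => ?_)
            rw [norm_mul]
            calc _ ≤ 1 * ‖∑ n ∈ Icc 1 x, χ (f n : ZMod q)‖ := by
                  gcongr; exact χ.norm_le_one _
              _ ≤ _ := by rw [one_mul]; exact hx χ hχ
        _ = K * (η / (K + 1)) * ∑ n ∈ Icc 1 x, g n := by
            rw [Finset.sum_const, nsmul_eq_mul, ← hK]; ring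
        _ ≤ η * ∑ n ∈ Icc 1 x, g n := by
            have : K * (η / (K + 1)) ≤ η := by
              rw [← mul_div_assoc, div_le_iff₀ (by positivity)]
              nlinarith
            gcongr
    have hlim : Tendsto (fun x : ℕ => (((Icc 1 x).filter (fun n => f n ≡ a [ZMOD (q : ℤ)])).card : ℝ) /
        (((Icc 1 x).filter (fun n => Int.gcd (f n) (q : ℤ) = 1)).card : ℝ)) atTop
        (𝓝 (1 / (q.totient : ℝ))) := by
      rw [Metric.tendsto_nhds]
      intro ε hε
      filter_upwards [hev (q.totient * (ε / 2)) (by positivity), hN.eventually_gt_atTop 0] with x hx hx0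
      rw [← hNcard, Real.dist_eq]
      set N := ∑ n ∈ Icc 1 x, g n
      set A := (((Icc 1 x).filter (fun n => f n ≡ a [ZMOD (q : ℤ)])).card : ℝ)
      have e1 : A / N - 1 / (q.totient : ℝ) = (q.totient * A - N) / (q.totient * N) := by
        field_simp
      rw [e1, abs_div, abs_of_pos (mul_pos hφ hx0), div_lt_iff₀ (mul_pos hφ hx0)]
      have : 0 < q.totient * N * (ε / 2) := by positivity
      nlinarith
    refine (hlim.comp (tendsto_nat_floor_atTop (α := ℝ))).congr' ?_
    filter_upwards [eventually_ge_atTop 0] with x hx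
    simp only [Function.comp]
    rw [cnt_eq x hx, cnt_eq x hx]

end

/-- **Proposition 1.1 (Narkiewicz).** For a polynomially-defined multiplicative function `f`
(with defining nonconstant polynomial `F` without multiple roots), there is a constant
`C = C(F)` such that `f` is weakly uniformly distributed modulo every positive integer `q`
all of whose prime factors exceed `C`. -/
theorem stmt5 (f : ℕ → ℤ) (F : Polynomial ℤ)
    (hf1 : f 1 = 1)
    (hfm : ∀ m n : ℕ, Nat.Coprime m n → f (m * n) = f m * f n)
    (hfp : ∀ p : ℕ, p.Prime → f p = F.eval (p : ℤ))
    (hFdeg : 0 < F.natDegree)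
    (hFsep : Squarefree (F.map (Int.castRingHom ℚ))) :
    ∃ C : ℕ, ∀ q : ℕ, 0 < q → (∀ p : ℕ, p.Prime → p ∣ q → C < p) →
      {n : ℕ | Int.gcd (f n) (q : ℤ) = 1}.Infinite ∧
      ∀ a : ℤ, Int.gcd a (q : ℤ) = 1 →
        Filter.Tendsto
          (fun x : ℝ => (cnt x (fun n => f n ≡ a [ZMOD (q : ℤ)]) : ℝ)
              / (cnt x (fun n => Int.gcd (f n) (q : ℤ) = 1) : ℝ))
          Filter.atTop (nhds (1 / (Nat.totient q : ℝ))) := by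
  obtain ⟨K, hK⟩ := PP_main F hFdeg hFsep
  exact ⟨K, fun q hq hp => main_q f F hf1 hfm hfp q hq (hK q hq hp)⟩
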